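/- Fix $k\in\mathbb N$ and let $Z=\{0,1,2\}^{\{0,\dots,k\}}$. All graphs are finite multigraphs; a graph is \emph{acyclic} if it has no loop, no two parallel edges (they form a cycle of length $2$) and no cycle of length at least $3$. \textbf{Patterns.} For $u,v\in Z$ let $(u\boxplus v)_j=\min(2,u_j+v_j)$, and let $\cup_2$ be the union of multisets in which multiplicities are added and then capped at $2$. A \emph{pattern} is a multiset $p$ over $Z$ with all multiplicities at most $2$ such that exactly one vector $z$ of $p$, of multiplicity $1$, satisfies $z_0=1$, and every other vector $v$ of $p$ satisfies $v_0=0$. The \emph{canonical forest} $F_p$ is the labeled forest consisting of one disjoint simple path for each vector $v$ of $p$ (counted with multiplicity), the path having exactly $v_j$ vertices labeled $j$ for each $j\in\{0,\dots,k\}$ (in some fixed order); it has exactly one vertex labeled $0$, its \emph{zero-vertex}. \textbf{Glueings.} An \emph{extension datum} $d=(H_0,J,L)$ consists of a finite simple forest $H_0$ on a vertex set $W$ disjoint from $V(F_p)$, a symmetric irreflexive relation $J$ on $\{1,\dots,k\}$ and a map $L:W\to 2^{\{1,\dots,k\}}$. For a labeled forest $F$, $\mathrm{Glue}(F;d)$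 is the multigraph on $V(F)\cup W$ whose edges are the edges of $F$, the edges of $H_0$, one further edge $uv$ for each unordered pair $\{u,v\}\subseteq V(F)$ with $(\mathrm{lab}(u),\mathrm{lab}(v))\in J$ (parallel to the edge $uv$ of $F$ if there is one), and one edge $wv$ for all $w\in W$, $v\in V(F)$ with $\mathrm{lab}(v)\in L(w)$. \textbf{Clique extensions.} An \emph{extended labeled graph} is a multigraph with vertex labels in $\mathbb N$ and exactly one vertex (the zero-vertex) labeled $0$. A \emph{clique expression} is built from the operations: create a vertex labeled $i$ together with an isolated zero-vertex; relabel all vertices labeled $i$ to $j$; join, i.e. add one new edge between each vertex labeled $i$ and each vertex labeled $j$, even if they are already adjacent; and disjoint union followed by identification of the two zero-vertices. Here $i\neq j$ are positive integers. A \emph{clique extension} $\tau$ is a clique expression with exactly one occurrence of a variable operand; $\tau(F)$ is the graph obtained when the variable is replaced by the extended labeled graph $F$, and $G_\tau$ is the graph obtained when it is replaced by the graph that has a zero-vertex only. A \emph{partial solution} of $G_\tau$ is a set $S$ of vertices of $G_\tau$ that contains the zero-vertex and induces an acyclic subgraph. A pattern $p$ is \emph{compatible} with $S$ under $\tau$ if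 $V(F_p)\cup S$ induces an acyclic subgraph of $\tau(F_p)$. Two finite families $P,Q$ of patterns are \emph{equivalent} if for every clique extension $\tau$ and every partial solution $S$ of $G_\tau$ the numbers of patterns in $P$ and in $Q$ that are compatible with $S$ under $\tau$ are congruent modulo $2$. \textbf{Statement.} Let $v_1,v_2,v_3\in Z$, let $R$ be a multiset over $Z$, and assume that $p_1=\langle v_1,v_2\boxplus v_3\rangle\cup_2R$, $p_2=\langle v_2,v_1\boxplus v_3\rangle\cup_2R$, $p_3=\langle v_3,v_1\boxplus v_2\rangle\cup_2R$ and $p_4=\langle v_1\boxplus v_2\boxplus v_3\rangle\cup_2R$ are patterns. Then: (a) for every extension datum $d$, the number of indices $i\in\{1,2,3,4\}$ such that $\mathrm{Glue}(F_{p_i};d)$ is acyclic is even; equivalently, the number of indices $i\in\{2,3,4\}$ such that $\mathrm{Glue}(F_{p_i};d)$ is acyclic is congruent modulo $2$ to $1$ if $\mathrm{Glue}(F_{p_1};d)$ is acyclic and to $0$ otherwise; (b) for every clique extension $\tau$ and every partial solution $S$ of $G_\tau$, the number of indices $i\in\{1,2,3,4\}$ such that $p_i$ is compatible with $S$ under $\tau$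 is even; (c) the family $\{p_2\}\,\Delta\,\{p_3\}\,\Delta\,\{p_4\}$ is equivalent to $\{p_1\}$. -/

import Mathlib

/-! ### Multigraphs -/

/-- The multigraph with vertex set `V` and edge set `E`, the edge `e` having ends `ends e`. -/
def multigraphOfEnds {V E : Type} (ends : E → Sym2 V) : Graph V E where
  vertexSet := Set.univ
  IsLink e x y := ends e = s(x, y)
  edgeSet := Set.univ
  isLink_symm := fun _ _ => ⟨fun _ _ h => h.trans Sym2.eq_swap⟩
  eq_or_eq_of_isLink_of_isLink := by
    intro e x y v w h h'
    rcases Sym2.eq_iff.1 (h.symm.trans h') with h | h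
    · exact Or.inl h.1
    · exact Or.inr h.1
  edge_mem_iff_exists_isLink := fun e => by
    simp only [Set.mem_univ, true_iff]
    exact Sym2.ind (fun x y => ⟨x, y, rfl⟩) (ends e)
  left_mem_of_isLink := fun _ _ _ _ => Set.mem_univ _

/-- A multigraph is acyclic if it has no cycle, where a cycle of length `n ≥ 1` consists of `n`
distinct vertices `v 0, …, v (n - 1)` and `n` distinct edges `e 0, …, e (n - 1)` such that `e i`
joins `v i` and `v (i + 1)`, indices being taken modulo `n`. Thus a loop is a cycle of length `1`
and two parallel edges form a cycle of length `2`. -/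
def Graph.HasNoCycle {α β : Type} (G : Graph α β) : Prop :=
  ∀ (n : ℕ) [NeZero n] (v : Fin n → α) (e : Fin n → β),
    Function.Injective v → Function.Injective e →
      ¬ ∀ i : Fin n, G.IsLink (e i) (v i) (v (i + 1))

/-! ### Labeled graphs, patterns and canonical forests -/

/-- A simple graph whose vertices are labeled with labels in `{0, 1, …, k}`. -/
structure LGraph (k : ℕ) where
  V : Type
  G : SimpleGraph V
  lab : V → Fin (k + 1)

/-- The vectors that assign a value `0`, `1` or `2` to each label in `{0, 1, …, k}`. -/
abbrev LVec (k : ℕ) : Type := Fin (k + 1) → Fin 3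

/-- The two-sum of two vectors: coordinatewise sum capped at `2`. -/
def twoSum {k : ℕ} (u v : LVec k) : LVec k :=
  fun j => ⟨min 2 ((u j : ℕ) + (v j : ℕ)), by omega⟩

/-- Cap all multiplicities of a multiset at `2`. -/
def cap2 {α : Type} [DecidableEq α] (m : Multiset α) : Multiset α :=
  m.dedup.bind fun a => Multiset.replicate (min 2 (m.count a)) a

/-- The two-union of two multisets: the multiplicities are added and capped at `2`. -/
def twoUnion {α : Type} [DecidableEq α] (m m' : Multiset α) : Multiset α := cap2 (m + m')

/-- A pattern is a multiset of vectors in which every vector has multiplicity at most `2`, exactly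
one vector `z` (of multiplicity `1`) satisfies `z 0 = 1`, and all other vectors `v` satisfy
`v 0 = 0`. -/
def IsPattern {k : ℕ} (p : Multiset (LVec k)) : Prop :=
  (∀ v, p.count v ≤ 2) ∧
    ∃ z ∈ p, p.count z = 1 ∧ z 0 = 1 ∧ ∀ v ∈ p, v ≠ z → v 0 = 0

/-- The labels along the canonical path of a vector `v`: `v j` vertices labeled `j` for each `j`,
in increasing order. -/
def pathLabels {k : ℕ} (v : LVec k) : List (Fin (k + 1)) :=
  (List.finRange (k + 1)).flatMap fun j => List.replicate (v j : ℕ) j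

/-- The canonical forest `F_p` of a pattern `p`: one disjoint simple path for each vector of `p`
(with multiplicity), the path of `v` having exactly `v j` vertices labeled `j`. -/
noncomputable def canonForest {k : ℕ} (p : Multiset (LVec k)) : LGraph k where
  V := Σ i : Fin p.toList.length, Fin (pathLabels (p.toList.get i)).length
  G := SimpleGraph.fromRel fun a b => a.1 = b.1 ∧ a.2.val + 1 = b.2.val
  lab := fun a => (pathLabels (p.toList.get a.1)).get a.2

/-! ### Extension data and glueings -/

/-- An extension datum `d = (H₀, J, L)`: a finite simple forest `H₀` on a vertex set `W`, a
symmetric irreflexive relation `J` on the labels `{1, …, k}`, and a map `L` assigning to each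
vertex of `W` a set of labels in `{1, …, k}`. -/
structure ExtDatum (k : ℕ) where
  W : Type
  finW : Finite W
  H0 : SimpleGraph W
  H0acyc : H0.IsAcyclic
  J : Fin (k + 1) → Fin (k + 1) → Prop
  Jsymm : ∀ i j, J i j → J j i
  Jirrefl : ∀ i, ¬ J i i
  Jpos : ∀ i j, J i j → i ≠ 0 ∧ j ≠ 0
  L : W → Set (Fin (k + 1))
  Lpos : ∀ w, (0 : Fin (k + 1)) ∉ L w

/-- The edges of the glueing: the edges of `F`, the edges of `H₀`, one edge for each unordered
pair of vertices of `F` with labels related by `J`, and one edge for each pair of `w ∈ W` and a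
vertex of `F` with label in `L w`. -/
inductive GlueEdge {k : ℕ} (F : LGraph k) (d : ExtDatum k) : Type
  | ofForest (e : F.G.edgeSet)
  | ofDatum (e : d.H0.edgeSet)
  | ofJ (e : {e : Sym2 F.V // ∃ u v, e = s(u, v) ∧ d.J (F.lab u) (F.lab v)})
  | ofL (e : {e : d.W × F.V // F.lab e.2 ∈ d.L e.1})

/-- The ends of the edges of the glueing. -/
def GlueEdge.ends {k : ℕ} {F : LGraph k} {d : ExtDatum k} : GlueEdge F d → Sym2 (F.V ⊕ d.W)
  | .ofForest e => e.1.map Sum.inl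
  | .ofDatum e => e.1.map Sum.inr
  | .ofJ e => e.1.map Sum.inl
  | .ofL e => s(Sum.inr e.1.1, Sum.inl e.1.2)

/-- The glueing `Glue(F; d)`. It is a multigraph: if an edge `{u, v}` of `F` satisfies
`(lab u, lab v) ∈ J`, then `u` and `v` are joined by two parallel edges. -/
def glue {k : ℕ} (F : LGraph k) (d : ExtDatum k) : Graph (F.V ⊕ d.W) (GlueEdge F d) :=
  multigraphOfEnds GlueEdge.ends

/-! ### Fusion clique expressions and clique extensions -/

/-- An extended labeled multigraph. Its vertices are the zero-vertex `none`, the only vertex with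
label `0`, and the vertices `some v` with `v : V`, which have positive labels. -/
structure ExtGraph where
  V : Type
  E : Type
  ends : E → Sym2 (Option V)
  lab : V → ℕ+

namespace ExtGraph

/-- The underlying multigraph. -/
def graph (G : ExtGraph) : Graph (Option G.V) G.E := multigraphOfEnds G.ends

/-- The empty extended labeled graph, which has the zero-vertex only. -/
def empty : ExtGraph where
  V := Empty
  E := Empty
  ends := Empty.elim
  lab := Empty.elim

/-- A vertex labeled `i` and the zero-vertex, both isolated. -/
def single (i : ℕ+) : ExtGraph where
  V := Unit
  E := Empty
  ends := Empty.elim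
  lab := fun _ => i

/-- Change every label `i` to `j`. -/
def relabel (i j : ℕ+) (G : ExtGraph) : ExtGraph where
  V := G.V
  E := G.E
  ends := G.ends
  lab := fun v => if G.lab v = i then j else G.lab v

/-- Add an edge between each vertex labeled `i` and each vertex labeled `j`, in addition to the
edges that exist already. -/
def join (i j : ℕ+) (G : ExtGraph) : ExtGraph where
  V := G.V
  E := G.E ⊕ {e : G.V × G.V // G.lab e.1 = i ∧ G.lab e.2 = j}
  ends := Sum.elim G.ends fun e => s(some e.1.1, some e.1.2)
  lab := G.lab

/-- The disjoint union, with the two zero-vertices identified. -/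
def union (G H : ExtGraph) : ExtGraph where
  V := G.V ⊕ H.V
  E := G.E ⊕ H.E
  ends := Sum.elim (fun e => (G.ends e).map (Option.map Sum.inl))
    (fun e => (H.ends e).map (Option.map Sum.inr))
  lab := Sum.elim G.lab H.lab

end ExtGraph

/-- A labeled graph with exactly one vertex labeled `0`, seen as an extended labeled multigraph. -/
def LGraph.toExt {k : ℕ} (F : LGraph k) : ExtGraph where
  V := {v : F.V // F.lab v ≠ 0}
  E := F.G.edgeSet
  ends := fun e => e.1.map fun v => if h : F.lab v ≠ 0 then some ⟨v, h⟩ else none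
  lab := fun v => ⟨(F.lab v.1).val, Nat.pos_of_ne_zero fun h => v.2 (Fin.ext h)⟩

/-- Fusion clique expressions. -/
inductive CliqueExpr : Type
  | vertex (i : ℕ+)
  | relabel (i j : ℕ+) (hij : i ≠ j) (μ : CliqueExpr)
  | join (i j : ℕ+) (hij : i ≠ j) (μ : CliqueExpr)
  | union (μ ν : CliqueExpr)

/-- The extended labeled multigraph `G_μ` defined by a clique expression `μ`. -/
def CliqueExpr.eval : CliqueExpr → ExtGraph
  | .vertex i => .single i
  | .relabel i j _ μ => μ.eval.relabel i j
  | .join i j _ μ => μ.eval.join i j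
  | .union μ ν => μ.eval.union ν.eval

/-- Clique extensions: clique expressions with exactly one occurrence of the variable operand. -/
inductive CliqueExt : Type
  | var
  | relabel (i j : ℕ+) (hij : i ≠ j) (τ : CliqueExt)
  | join (i j : ℕ+) (hij : i ≠ j) (τ : CliqueExt)
  | unionLeft (τ : CliqueExt) (μ : CliqueExpr)
  | unionRight (μ : CliqueExpr) (τ : CliqueExt)

namespace CliqueExt

/-- The graph `G_{τ(μ)}` resulting from a clique extension `τ` when the variable is replaced by an
expression `μ` that defines the extended labeled graph `F`. -/
def eval : CliqueExt → ExtGraph → ExtGraph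
  | .var, F => F
  | .relabel i j _ τ, F => (τ.eval F).relabel i j
  | .join i j _ τ, F => (τ.eval F).join i j
  | .unionLeft τ μ, F => (τ.eval F).union μ.eval
  | .unionRight μ τ, F => μ.eval.union (τ.eval F)

/-- The graph `G_τ`, in which the variable stands for the empty extended labeled graph. -/
def graph (τ : CliqueExt) : ExtGraph := τ.eval .empty

/-- The vertices of the graph that replaces the variable, as vertices of the resulting graph. -/
def inner : (τ : CliqueExt) → (F : ExtGraph) → F.V → (τ.eval F).V
  | .var, _ => id
  | .relabel _ _ _ τ, F => τ.inner F
  | .join _ _ _ τ, F => τ.inner F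
  | .unionLeft τ _, F => Sum.inl ∘ τ.inner F
  | .unionRight _ τ, F => Sum.inr ∘ τ.inner F

/-- The vertices of `G_τ`, as vertices of the resulting graph. -/
def outer : (τ : CliqueExt) → (F : ExtGraph) → (τ.eval .empty).V → (τ.eval F).V
  | .var, _ => Empty.elim
  | .relabel _ _ _ τ, F => τ.outer F
  | .join _ _ _ τ, F => τ.outer F
  | .unionLeft τ _, F => Sum.map (τ.outer F) id
  | .unionRight _ τ, F => Sum.map id (τ.outer F)

/-- A partial solution of `G_τ` is a set of vertices that contains the zero-vertex and induces an
acyclic subgraph. -/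
def IsPartialSolution (τ : CliqueExt) (S : Set (Option τ.graph.V)) : Prop :=
  none ∈ S ∧ (τ.graph.graph.induce S).HasNoCycle

/-- `F` is compatible with the partial solution `S` under `τ` if the vertices of `F` and `S`
together induce an acyclic subgraph of the graph obtained by replacing the variable of `τ`
by `F`. -/
def Compatible (τ : CliqueExt) (S : Set (Option τ.graph.V)) (F : ExtGraph) : Prop :=
  ((τ.eval F).graph.induce
    (Set.range (Option.map (τ.inner F)) ∪ Option.map (τ.outer F) '' S)).HasNoCycle

end CliqueExt

/-- Two families of patterns are equivalent if, for each clique extension and each partial solution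
of it, the numbers of patterns in the two families whose canonical forests are compatible with the
partial solution are congruent modulo `2`. -/
def PatternsEquiv {k : ℕ} (P Q : Finset (Multiset (LVec k))) : Prop :=
  ∀ (τ : CliqueExt) (S : Set (Option τ.graph.V)), τ.IsPartialSolution S →
    {p | p ∈ P ∧ τ.Compatible S (canonForest p).toExt}.ncard ≡
      {p | p ∈ Q ∧ τ.Compatible S (canonForest p).toExt}.ncard [MOD 2]

/-!
A finite multigraph is acyclic exactly when its coboundary map over `𝔽₂`, from functions on vertices
to functions on edges, is surjective. A glueing or a clique extension sees a vertex of the canonical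
forest only through its label, and an acyclic graph contains no two parallel edges, so
multiplicities of two or more are indistinguishable. Hence contracting the paths of `F_p` turns all
four graphs into quotients of a single one: three path vertices `1`, `2`, `3`, standing for `v₁`,
`v₂`, `v₃`, are identified according to the partitions `1 | 23`, `2 | 13`, `3 | 12` and `123`.

The functions on a quotient are those `f` with `f 2 = f 3`, `f 1 = f 3`, `f 1 = f 2` or all three
equations. Let `I` be the image of the kernel of the coboundary map under
`f ↦ (f 2 - f 3, f 1 - f 3)`, a subspace of `𝔽₂²`. If the coboundary map is surjective, it stays so
on the functions on the quotient exactly when the corresponding nonzero functional does not vanish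
on `I`, respectively when `I` is everything, and the number of these four events is `0`, `2` or `4`.
-/

/-! ### Forests and the coboundary map -/

section Coboundary

variable {E E' N N' : Type*}

/-- The coboundary map modulo `2` of the multigraph whose edge `e` has ends `ends e`: the value of
a vertex function on an edge is the sum of its values at the two ends. -/
def coboundary (ends : E → Sym2 N) : (N → ZMod 2) →ₗ[ZMod 2] E → ZMod 2 where
  toFun f e := Sym2.lift ⟨fun x y => f x + f y, fun x y => add_comm (f x) (f y)⟩ (ends e)
  map_add' f g := by
    ext e
    induction h : ends e with
    | _ x y => simp only [h, Sym2.lift_mk, Pi.add_apply, add_add_add_comm]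
  map_smul' c f := by
    ext e
    induction h : ends e with
    | _ x y => simp only [h, Sym2.lift_mk, Pi.smul_apply, smul_add, RingHom.id_apply]

theorem coboundary_apply {ends : E → Sym2 N} {e : E} {x y : N} (h : ends e = s(x, y))
    (f : N → ZMod 2) : coboundary ends f e = f x + f y := by
  simp only [coboundary, LinearMap.coe_mk, AddHom.coe_mk, h, Sym2.lift_mk]

theorem coboundary_map (φ : N → N') (ends : E → Sym2 N) :
    coboundary (Sym2.map φ ∘ ends) = coboundary ends ∘ₗ LinearMap.funLeft (ZMod 2) (ZMod 2) φ := by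
  ext1 f
  ext e
  induction h : ends e with
  | _ x y =>
    rw [coboundary_apply (by rw [Function.comp_apply, h, Sym2.map_mk]), LinearMap.comp_apply,
      coboundary_apply h, LinearMap.funLeft_apply, LinearMap.funLeft_apply]

/-- A multigraph is a forest if every edge function modulo `2` is a coboundary. For finite
multigraphs this is the absence of cycles, including loops and pairs of parallel edges. -/
def IsForest (ends : E → Sym2 N) : Prop := Function.Surjective (coboundary ends)

theorem isForest_iff {ends : E → Sym2 N} : IsForest ends ↔
    ∀ c : E → ZMod 2, ∃ f : N → ZMod 2, ∀ e x y, ends e = s(x, y) → f x + f y = c e := by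
  refine forall_congr' fun c => exists_congr fun f => ⟨?_, fun hf => funext fun e => ?_⟩
  · rintro rfl e x y he
    exact (coboundary_apply he f).symm
  · induction he : ends e with
    | _ x y => rw [coboundary_apply he, hf e x y he]

theorem IsForest.not_eq_diag {ends : E → Sym2 N} (h : IsForest ends) (e : E) (x : N) :
    ends e ≠ s(x, x) := by
  intro he
  obtain ⟨f, hf⟩ := isForest_iff.1 h 1
  have := hf e x x he
  rw [CharTwo.add_self_eq_zero, Pi.one_apply] at this
  exact zero_ne_one this

theorem IsForest.injective {ends : E → Sym2 N} (h : IsForest ends) : Function.Injective ends := by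
  classical
  intro e e' hee'
  obtain ⟨f, hf⟩ := isForest_iff.1 h (Pi.single e 1)
  induction he : ends e with
  | _ x y =>
    by_contra hne
    have h1 := hf e x y he
    have h0 := hf e' x y (hee' ▸ he)
    rw [Pi.single_eq_same] at h1
    rw [Pi.single_eq_of_ne' hne, h1] at h0
    exact one_ne_zero h0

theorem IsForest.of_injective {ends : E → Sym2 N} {ends' : E' → Sym2 N'} (h : IsForest ends')
    {j : E → E'} (hj : Function.Injective j) (φ : N → N')
    (hends : ∀ e, ends' (j e) = (ends e).map φ) : IsForest ends := by
  refine isForest_iff.2 fun c => ?_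
  obtain ⟨f, hf⟩ := isForest_iff.1 h (Function.extend j c 0)
  refine ⟨f ∘ φ, fun e x y he => ?_⟩
  have := hf (j e) (φ x) (φ y) (by rw [hends, he, Sym2.map_mk])
  rwa [hj.extend_apply] at this

theorem IsForest.map_injective {ends : E → Sym2 N} (h : IsForest ends) {φ : N → N'}
    (hφ : Function.Injective φ) : IsForest (Sym2.map φ ∘ ends) := by
  rw [IsForest, coboundary_map, LinearMap.coe_comp]
  exact h.comp (LinearMap.funLeft_surjective_of_injective _ _ _ hφ)

theorem IsForest.of_leaves {ends : E → Sym2 N} (L : Set N)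
    (hloop : ∀ e x y, ends e = s(x, y) → x ∈ L → y ∉ L)
    (hleaf : ∀ x ∈ L, ∀ e e', x ∈ ends e → x ∈ ends e' → e = e')
    (h : IsForest fun e : {e // ∀ x ∈ ends e, x ∉ L} => ends e) : IsForest ends := by
  classical
  refine isForest_iff.2 fun c => ?_
  obtain ⟨f, hf⟩ := isForest_iff.1 h fun e => c e
  have hext : ∀ x, ∃ a, ∀ e y, x ∈ L → ends e = s(x, y) → a + f y = c e := by
    intro x
    by_cases hx : x ∈ L ∧ ∃ e y, ends e = s(x, y)
    · obtain ⟨hxL, e, y, he⟩ := hx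
      refine ⟨c e - f y, fun e' y' _ he' => ?_⟩
      obtain rfl := hleaf x hxL e e' (he ▸ Sym2.mem_mk_left x y) (he' ▸ Sym2.mem_mk_left x y')
      obtain rfl := Sym2.congr_right.1 (he.symm.trans he')
      exact sub_add_cancel _ _
    · exact ⟨0, fun e y hxL he => absurd ⟨hxL, e, y, he⟩ hx⟩
  choose g hg using hext
  refine ⟨L.piecewise g f, fun e x y he => ?_⟩
  have he' : ends e = s(y, x) := he.trans Sym2.eq_swap
  by_cases hx : x ∈ L
  · rw [L.piecewise_eq_of_mem _ _ hx, L.piecewise_eq_of_notMem _ _ (hloop e x y he hx),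
      hg x e y hx he]
  by_cases hy : y ∈ L
  · rw [L.piecewise_eq_of_notMem _ _ hx, L.piecewise_eq_of_mem _ _ hy, add_comm, hg y e x hy he']
  · rw [L.piecewise_eq_of_notMem _ _ hx, L.piecewise_eq_of_notMem _ _ hy]
    refine hf ⟨e, fun z hz => ?_⟩ x y he
    rcases Sym2.mem_iff.1 (he ▸ hz) with rfl | rfl <;> assumption

end Coboundary

/-! ### Acyclic multigraphs -/

section Acyclic

variable {α β : Type} {G : Graph α β}

/-- Adjacency of vertices in the multigraph that arises from `G` by deleting the edge `e`. -/
def adjAvoiding (G : Graph α β) (e : β) : SimpleGraph α :=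
  SimpleGraph.fromRel fun u v => ∃ e', e' ≠ e ∧ G.IsLink e' u v

theorem adjAvoiding_adj {e : β} {u v : α} :
    (adjAvoiding G e).Adj u v ↔ u ≠ v ∧ ∃ e', e' ≠ e ∧ G.IsLink e' u v := by
  simp only [adjAvoiding, SimpleGraph.fromRel_adj, G.isLink_comm (x := v), or_self]

/-- The edge `e` closes the path `p` to a cycle. -/
theorem not_hasNoCycle_of_isPath {e : β} {x y : α} (he : G.IsLink e x y)
    {p : (adjAvoiding G e).Walk x y} (hp : p.IsPath) : ¬ G.HasNoCycle := by
  have hadj (i : ℕ) (hi : i < p.length) :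
      ∃ e', e' ≠ e ∧ G.IsLink e' (p.getVert i) (p.getVert (i + 1)) :=
    (adjAvoiding_adj.1 (p.adj_getVert_succ hi)).2
  choose c hce hc using hadj
  have hinj {i j : ℕ} (hi : i ≤ p.length) (hj : j ≤ p.length)
      (h : p.getVert i = p.getVert j) : i = j := hp.getVert_injOn hi hj h
  have hc_inj {i j : ℕ} (hi : i < p.length) (hj : j < p.length) (h : c i hi = c j hj) : i = j := by
    rcases (hc i hi).eq_and_eq_or_eq_and_eq (h ▸ hc j hj) with ⟨hij, -⟩ | ⟨hij, hji⟩
    · exact hinj hi.le hj.le hij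
    · have := hinj hi.le hj hij
      have := hinj hi hj.le hji
      omega
  refine fun hG => hG (p.length + 1) (fun i => p.getVert i) (Fin.snoc (fun i => c i i.2) e)
    (fun i j h => Fin.ext (hinj i.is_le j.is_le h)) ?_ fun i => ?_
  · rw [Fin.snoc_injective_iff]
    refine ⟨fun i j h => Fin.ext (hc_inj i.2 j.2 h), ?_⟩
    rintro ⟨i, hi⟩
    exact hce _ _ hi
  · cases i using Fin.lastCases with
    | last =>
      simpa only [Fin.snoc_last, Fin.val_last, Fin.last_add_one, Fin.val_zero,
        SimpleGraph.Walk.getVert_zero, SimpleGraph.Walk.getVert_length] using he.symm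
    | cast i =>
      simpa only [Fin.snoc_castSucc, Fin.val_castSucc, Fin.coeSucc_eq_succ, Fin.val_succ] using
        hc i i.2

/-- The edge `e` is a bridge, so a side of the cut that it forms is crossed by no other edge. -/
theorem exists_cut (hG : G.HasNoCycle) [DecidableEq β] (e : β) :
    ∃ f : α → ZMod 2, ∀ e' u v, G.IsLink e' u v →
      f u + f v = (Pi.single e 1 : β → ZMod 2) e' := by
  classical
  by_cases he : ∃ x y, G.IsLink e x y
  swap
  · refine ⟨0, fun e' u v h => ?_⟩
    rw [Pi.single_eq_of_ne (by rintro rfl; exact he ⟨u, v, h⟩), Pi.zero_apply, Pi.zero_apply,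
      add_zero]
  obtain ⟨x, y, he⟩ := he
  have hxy : ¬ (adjAvoiding G e).Reachable x y := fun h =>
    let ⟨_, hp⟩ := h.exists_isPath
    not_hasNoCycle_of_isPath he hp hG
  refine ⟨fun u => if (adjAvoiding G e).Reachable x u then 1 else 0, fun e' u v h => ?_⟩
  obtain rfl | hne := eq_or_ne e' e
  · rw [Pi.single_eq_same]
    rcases h.eq_and_eq_or_eq_and_eq he with ⟨rfl, rfl⟩ | ⟨rfl, rfl⟩ <;> simp [hxy]
  · have : (adjAvoiding G e).Reachable x u ↔ (adjAvoiding G e).Reachable x v := by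
      obtain rfl | huv := eq_or_ne u v
      · rfl
      · have hadj := (adjAvoiding_adj.2 ⟨huv, e', hne, h⟩).reachable
        exact ⟨fun hu => hu.trans hadj, fun hv => hv.trans hadj.symm⟩
    simp only [this, CharTwo.add_self_eq_zero, Pi.single_eq_of_ne hne]

theorem hasNoCycle_iff [Finite β] : G.HasNoCycle ↔
    ∀ c : β → ZMod 2, ∃ f : α → ZMod 2, ∀ e x y, G.IsLink e x y → f x + f y = c e := by
  classical
  refine ⟨fun hG c => ?_, fun h n _ v e _ he hlink => ?_⟩
  · have := Fintype.ofFinite β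
    choose f hf using exists_cut hG
    refine ⟨∑ e, c e • f e, fun e x y hlink => ?_⟩
    simp only [Finset.sum_apply, Pi.smul_apply, smul_eq_mul, ← Finset.sum_add_distrib, ← mul_add,
      hf _ e x y hlink, Pi.single_apply, mul_ite, mul_one, mul_zero,
      Finset.sum_ite_eq, Finset.mem_univ, if_true]
  · obtain ⟨f, hf⟩ := h (Pi.single (e 0) 1)
    have hsum : ∑ i, (f (v i) + f (v (i + 1))) = 0 := by
      have hshift : ∑ i, f (v (i + 1)) = ∑ i, f (v i) :=
        Equiv.sum_comp (Equiv.addRight 1) fun i => f (v i)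
      rw [Finset.sum_add_distrib, hshift, CharTwo.add_self_eq_zero]
    simp only [fun i => hf (e i) _ _ (hlink i), Pi.single_apply, he.eq_iff, Finset.sum_ite_eq',
      Finset.mem_univ, if_true] at hsum
    exact one_ne_zero hsum

theorem multigraphOfEnds_hasNoCycle_iff [Finite β] {ends : β → Sym2 α} :
    (multigraphOfEnds ends).HasNoCycle ↔ IsForest ends :=
  hasNoCycle_iff.trans isForest_iff.symm

end Acyclic

/-! ### Multiplicities up to two -/

section FiberCard

variable {E E' Z Z' N N' M : Type*}

/-- The number of times that the family `a` takes the value `z`, in particular the multiplicity of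
an edge in a multigraph given by the family of its edges. -/
noncomputable def fiberCard (a : E → Z) (z : Z) : ℕ∞ := (a ⁻¹' {z}).encard

theorem one_le_fiberCard_iff {a : E → Z} {z : Z} : 1 ≤ fiberCard a z ↔ ∃ e, a e = z :=
  Set.one_le_encard_iff_nonempty

theorem two_le_fiberCard_iff {a : E → Z} {z : Z} :
    2 ≤ fiberCard a z ↔ ∃ e e', e ≠ e' ∧ a e = z ∧ a e' = z := by
  rw [fiberCard, ← one_add_one_eq_two, ENat.add_one_le_iff ENat.one_ne_top,
    Set.one_lt_encard_iff]
  exact ⟨fun ⟨e, e', he, he', hne⟩ => ⟨e, e', hne, he, he'⟩,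
    fun ⟨e, e', hne, he, he'⟩ => ⟨e, e', he, he', hne⟩⟩

theorem min_two_eq_ite (n : ℕ∞) : min 2 n = if 2 ≤ n then 2 else if 1 ≤ n then 1 else 0 := by
  split_ifs with h2 h1
  · exact min_eq_left h2
  · exact (min_eq_right (not_le.1 h2).le).trans
      (le_antisymm (Order.le_of_lt_add_one (not_le.1 h2)) h1)
  · exact (min_eq_right (not_le.1 h2).le).trans (Order.lt_one_iff.1 (not_le.1 h1))

theorem min_two_eq_min_two_iff {m n : ℕ∞} :
    min 2 m = min 2 n ↔ (1 ≤ m ↔ 1 ≤ n) ∧ (2 ≤ m ↔ 2 ≤ n) := by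
  refine ⟨fun h => ?_, fun ⟨h1, h2⟩ => ?_⟩
  · have hle {c l : ℕ∞} (hc : c ≤ 2) : c ≤ l ↔ c ≤ min 2 l := by
      simp only [le_min_iff, hc, true_and]
    rw [hle one_le_two, hle le_rfl, h, ← hle one_le_two, ← hle le_rfl]
    exact ⟨.rfl, .rfl⟩
  · simp only [min_two_eq_ite, h1, h2]

theorem min_fiberCard_eq_iff {a : E → Z} {b : E' → Z'} {z : Z} {z' : Z'} :
    min 2 (fiberCard a z) = min 2 (fiberCard b z') ↔
      ((∃ e, a e = z) ↔ ∃ e, b e = z') ∧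
        ((∃ e e', e ≠ e' ∧ a e = z ∧ a e' = z) ↔ ∃ e e', e ≠ e' ∧ b e = z' ∧ b e' = z') := by
  rw [min_two_eq_min_two_iff, one_le_fiberCard_iff, one_le_fiberCard_iff, two_le_fiberCard_iff,
    two_le_fiberCard_iff]

theorem fiberCard_eq_of_bijOn {a : E → Z} {b : E' → Z'} {z : Z} {z' : Z'} {f : E → E'}
    (hf : Set.BijOn f (a ⁻¹' {z}) (b ⁻¹' {z'})) : fiberCard a z = fiberCard b z' := by
  rw [fiberCard, fiberCard, ← hf.image_eq, hf.injOn.encard_image]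

theorem fiberCard_of_forall_ne {a : E → Z} {z : Z} (h : ∀ e, a e ≠ z) : fiberCard a z = 0 :=
  Set.encard_eq_zero.2 (Set.eq_empty_of_forall_notMem h)

theorem fiberCard_sumElim (a : E → Z) (b : E' → Z) (z : Z) :
    fiberCard (Sum.elim a b) z = fiberCard a z + fiberCard b z := by
  have hsplit : Sum.elim a b ⁻¹' {z} = Sum.inl '' (a ⁻¹' {z}) ∪ Sum.inr '' (b ⁻¹' {z}) := by
    ext (e | e) <;> simp
  have hdisj : Disjoint (Sum.inl '' (a ⁻¹' {z})) (Sum.inr '' (b ⁻¹' {z})) := by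
    simp [Set.disjoint_left]
  rw [fiberCard, hsplit, Set.encard_union_eq hdisj, Sum.inl_injective.encard_image,
    Sum.inr_injective.encard_image, fiberCard, fiberCard]

theorem fiberCard_injective_comp {φ : Z → Z'} (hφ : Function.Injective φ) (a : E → Z) (z : Z) :
    fiberCard (φ ∘ a) (φ z) = fiberCard a z := by
  rw [fiberCard, fiberCard, Set.preimage_comp, ← Set.image_singleton, hφ.preimage_image]

theorem fiberCard_sumMap_inl (a : E → Z) (b : E' → Z') (z : Z) :
    fiberCard (Sum.map a b) (.inl z) = fiberCard a z := by
  rw [Sum.map, fiberCard_sumElim, fiberCard_injective_comp Sum.inl_injective,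
    fiberCard_of_forall_ne (a := Sum.inr ∘ b) fun _ => Sum.inr_ne_inl, add_zero]

theorem fiberCard_sumMap_inr (a : E → Z) (b : E' → Z') (z : Z') :
    fiberCard (Sum.map a b) (.inr z) = fiberCard b z := by
  rw [Sum.map, fiberCard_sumElim, fiberCard_injective_comp Sum.inr_injective,
    fiberCard_of_forall_ne (a := Sum.inl ∘ a) fun _ => Sum.inl_ne_inr, zero_add]

/-- Since a forest has no parallel edges, multiplicities of at least two are indistinguishable. -/
theorem IsForest.comp_congr {t : Z → Sym2 N} {a : E → Z} {b : E' → Z}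
    (hab : ∀ z, min 2 (fiberCard a z) = min 2 (fiberCard b z)) (h : IsForest (t ∘ a)) :
    IsForest (t ∘ b) := by
  have hb : Function.Injective b := by
    intro e e' hee'
    by_contra hne
    obtain ⟨i, i', hii', hi, hi'⟩ :=
      (min_fiberCard_eq_iff.1 (hab (b e))).2.2 ⟨e, e', hne, rfl, hee'.symm⟩
    exact hii' (h.injective (congrArg t (hi.trans hi'.symm)))
  have hlift (e : E') : ∃ i, a i = b e := (min_fiberCard_eq_iff.1 (hab (b e))).1.2 ⟨e, rfl⟩
  choose j hj using hlift
  refine h.of_injective (j := j) (fun e e' hee' => hb ?_) id fun e => ?_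
  · rw [← hj, ← hj, hee']
  · rw [Sym2.map_id, Function.comp_apply, hj, id, Function.comp_apply]

theorem isForest_comp_congr (t : Z → Sym2 N) {a : E → Z} {b : E' → Z}
    (h : ∀ z, min 2 (fiberCard a z) = min 2 (fiberCard b z)) :
    IsForest (t ∘ a) ↔ IsForest (t ∘ b) :=
  ⟨.comp_congr h, .comp_congr fun z => (h z).symm⟩

theorem exists_of_sym2Map_eq {m : N → M} {e : Sym2 N} {z w : M} (he : e.map m = s(z, w)) :
    ∃ x y, e = s(x, y) ∧ m x = z ∧ m y = w := by
  induction e with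
  | _ x y =>
    rcases Sym2.eq_iff.1 he with ⟨hx, hy⟩ | ⟨hx, hy⟩
    exacts [⟨x, y, rfl, hx, hy⟩, ⟨y, x, Sym2.eq_swap, hy, hx⟩]

theorem exists_sym2Map_eq_iff {m : N → M} {z w : M} :
    (∃ e, Sym2.map m e = s(z, w)) ↔ (∃ x, m x = z) ∧ ∃ y, m y = w := by
  refine ⟨?_, fun ⟨⟨x, hx⟩, y, hy⟩ => ⟨s(x, y), by rw [Sym2.map_mk, hx, hy]⟩⟩
  rintro ⟨e, he⟩
  obtain ⟨x, y, -, hx, hy⟩ := exists_of_sym2Map_eq he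
  exact ⟨⟨x, hx⟩, y, hy⟩

theorem exists_ne_sym2Map_eq_iff {m : N → M} {z w : M} :
    (∃ e e', e ≠ e' ∧ Sym2.map m e = s(z, w) ∧ Sym2.map m e' = s(z, w)) ↔
      ((∃ x x', x ≠ x' ∧ m x = z ∧ m x' = z) ∧ ∃ y, m y = w) ∨
        ((∃ x, m x = z) ∧ ∃ y y', y ≠ y' ∧ m y = w ∧ m y' = w) := by
  constructor
  · rintro ⟨e, e', hne, he, he'⟩
    obtain ⟨x, y, rfl, hx, hy⟩ := exists_of_sym2Map_eq he
    obtain ⟨x', y', rfl, hx', hy'⟩ := exists_of_sym2Map_eq he'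
    by_cases hxx' : x = x'
    · exact .inr ⟨⟨x, hx⟩, y, y', fun hyy' => hne (by rw [hxx', hyy']), hy, hy'⟩
    · exact .inl ⟨⟨x, x', hxx', hx, hx'⟩, y, hy⟩
  · rintro (⟨⟨x, x', hne, hx, hx'⟩, y, hy⟩ | ⟨⟨x, hx⟩, y, y', hne, hy, hy'⟩)
    · exact ⟨s(x, y), s(x', y), mt Sym2.congr_left.1 hne, by rw [Sym2.map_mk, hx, hy],
        by rw [Sym2.map_mk, hx', hy]⟩
    · exact ⟨s(x, y), s(x, y'), mt Sym2.congr_right.1 hne, by rw [Sym2.map_mk, hx, hy],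
        by rw [Sym2.map_mk, hx, hy']⟩

theorem min_fiberCard_sym2Map_congr {m : N → M} {m' : N' → M}
    (h : ∀ z, min 2 (fiberCard m z) = min 2 (fiberCard m' z)) (s : Sym2 M) :
    min 2 (fiberCard (Sym2.map m) s) = min 2 (fiberCard (Sym2.map m') s) := by
  induction s with
  | _ z w =>
    have hz := min_fiberCard_eq_iff.1 (h z)
    have hw := min_fiberCard_eq_iff.1 (h w)
    rw [min_fiberCard_eq_iff, exists_sym2Map_eq_iff, exists_sym2Map_eq_iff,
      exists_ne_sym2Map_eq_iff, exists_ne_sym2Map_eq_iff, hz.1, hz.2, hw.1, hw.2]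
    exact ⟨.rfl, .rfl⟩

end FiberCard

/-! ### Blow-ups -/

section BlowUp

variable {A X Y M N N' : Type*}

/-- The edges of the blow-up of the multigraph with edge family `κ` on the set `X` along `ℓ`, a map
that sorts the vertices in `N` into types in `X`: each edge of `κ` gives rise to an edge between
each pair of vertices whose types are its ends. -/
@[ext]
structure BlowUpEdge (κ : A → Sym2 X) (ℓ : N → X) where
  ends : Sym2 N
  origin : A
  map_ends : ends.map ℓ = κ origin

/-- The blow-up of `κ` along `ℓ`, given by the family of its edges. -/
def blowUp (κ : A → Sym2 X) (ℓ : N → X) (e : BlowUpEdge κ ℓ) : Sym2 N := e.ends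

theorem fiberCard_blowUp (κ : A → Sym2 X) (ℓ : N → X) (s : Sym2 N) :
    fiberCard (blowUp κ ℓ) s = fiberCard κ (s.map ℓ) := by
  refine fiberCard_eq_of_bijOn (f := BlowUpEdge.origin) ⟨?_, ?_, ?_⟩
  · rintro e rfl
    exact e.map_ends.symm
  · rintro e he e' he' h
    exact BlowUpEdge.ext (he.trans he'.symm) h
  · rintro a ha
    exact ⟨⟨s, a, ha.symm⟩, rfl, rfl⟩

theorem fiberCard_origin (κ : A → Sym2 X) (ℓ : N → X) (a : A) :
    fiberCard (BlowUpEdge.origin (κ := κ) (ℓ := ℓ)) a = fiberCard (Sym2.map ℓ) (κ a) := by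
  refine fiberCard_eq_of_bijOn (f := BlowUpEdge.ends) ⟨?_, ?_, ?_⟩
  · rintro e rfl
    exact e.map_ends
  · rintro e he e' he' hee'
    exact BlowUpEdge.ext hee' (he.trans he'.symm)
  · rintro e he
    exact ⟨⟨e, a, he⟩, rfl, rfl⟩

theorem isForest_map_blowUp_comp_iff (κ : A → Sym2 X) (π : M → X) (m : N → M) (r : N → Y) :
    IsForest (Sym2.map r ∘ blowUp κ (π ∘ m)) ↔ IsForest (Sym2.map r ∘ blowUp (blowUp κ π) m) :=
  isForest_comp_congr _ fun s => by
    rw [fiberCard_blowUp, fiberCard_blowUp, fiberCard_blowUp, Sym2.map_map]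

theorem map_comp_blowUp (κ : A → Sym2 M) (ρ : M → Y) (m : N → M) :
    Sym2.map (ρ ∘ m) ∘ blowUp κ m = (Sym2.map ρ ∘ κ) ∘ BlowUpEdge.origin := by
  funext e
  rw [Function.comp_apply, Function.comp_apply, Function.comp_apply, ← e.map_ends, Sym2.map_map,
    blowUp]

theorem isForest_map_comp_blowUp_congr (κ : A → Sym2 M) (ρ : M → Y) {m : N → M} {m' : N' → M}
    (h : ∀ z, min 2 (fiberCard m z) = min 2 (fiberCard m' z)) :
    IsForest (Sym2.map (ρ ∘ m) ∘ blowUp κ m) ↔ IsForest (Sym2.map (ρ ∘ m') ∘ blowUp κ m') := by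
  rw [map_comp_blowUp, map_comp_blowUp]
  refine isForest_comp_congr _ fun a => ?_
  rw [fiberCard_origin, fiberCard_origin]
  exact min_fiberCard_sym2Map_congr h (κ a)

theorem isForest_map_blowUp_congr (κ : A → Sym2 X) {r : N → Y} {ℓ : N → X} {r' : N' → Y}
    {ℓ' : N' → X} (h : ∀ z, min 2 (fiberCard (fun n => (r n, ℓ n)) z) =
      min 2 (fiberCard (fun n => (r' n, ℓ' n)) z)) :
    IsForest (Sym2.map r ∘ blowUp κ ℓ) ↔ IsForest (Sym2.map r' ∘ blowUp κ ℓ') := by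
  refine (isForest_map_blowUp_comp_iff κ Prod.snd (fun n => (r n, ℓ n)) r).trans ?_
  refine Iff.trans ?_ (isForest_map_blowUp_comp_iff κ Prod.snd (fun n => (r' n, ℓ' n)) r').symm
  exact isForest_map_comp_blowUp_congr (blowUp κ Prod.snd) Prod.fst h

/-- The edges at `n` to `x` and `x'` and the corresponding edges at `n'` would form a cycle. -/
theorem IsForest.edge_unique_of_twin {κ : A → Sym2 X} {ℓ : N → X} (h : IsForest (blowUp κ ℓ))
    {n n' x x' : N} (hne : n ≠ n') (hℓ : ℓ n = ℓ n') {e e' : BlowUpEdge κ ℓ}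
    (he : blowUp κ ℓ e = s(n, x)) (he' : blowUp κ ℓ e' = s(n, x')) : e = e' := by
  classical
  have htwin {e : BlowUpEdge κ ℓ} {x : N} (he : blowUp κ ℓ e = s(n, x)) :
      (s(n', x)).map ℓ = κ e.origin := by
    rw [← e.map_ends, Sym2.map_mk, ← hℓ, ← Sym2.map_mk, ← he, blowUp]
  let d : BlowUpEdge κ ℓ := ⟨s(n', x), e.origin, htwin he⟩
  let d' : BlowUpEdge κ ℓ := ⟨s(n', x'), e'.origin, htwin he'⟩
  by_contra hee'
  have hd : d ≠ e := by
    intro hde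
    have : s(n', x) = s(n, x) := (congrArg (blowUp κ ℓ) hde).trans he
    exact hne (Sym2.congr_left.1 this).symm
  have hd' : d' ≠ e := by
    intro hde
    have : s(n', x') = s(n, x) := (congrArg (blowUp κ ℓ) hde).trans he
    rcases Sym2.eq_iff.1 this with ⟨hn, -⟩ | ⟨rfl, rfl⟩
    · exact hne hn.symm
    · exact h.not_eq_diag e' _ he'
  obtain ⟨f, hf⟩ := isForest_iff.1 h (Pi.single e 1)
  have hfe := hf e n x he
  have hfe' := hf e' n x' he'
  have hfd := hf d n' x rfl
  have hfd' := hf d' n' x' rfl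
  rw [Pi.single_eq_same] at hfe
  rw [Pi.single_eq_of_ne' hee'] at hfe'
  rw [Pi.single_eq_of_ne hd] at hfd
  rw [Pi.single_eq_of_ne hd'] at hfd'
  have : (1 : ZMod 2) = 0 := by linear_combination hfd + hfe' - hfe - hfd'
  exact one_ne_zero this

theorem eq_of_sym2Map_eq {g : N → N'} {s s' : Sym2 N} (h : ∀ x ∈ s, ∀ y, g x = g y → x = y)
    (hs : s.map g = s'.map g) : s = s' := by
  cases s with | _ x y
  cases s' with | _ x' y'
  have hx := h x (Sym2.mem_mk_left x y)
  have hy := h y (Sym2.mem_mk_right x y)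
  rcases Sym2.eq_iff.1 hs with ⟨hxx', hyy'⟩ | ⟨hxy', hyx'⟩
  · rw [hx x' hxx', hy y' hyy']
  · rw [hx y' hxy', hy x' hyx', Sym2.eq_swap]

/-- The vertex map `g` is injective up to twins, and a twin in a forest is a leaf. -/
theorem IsForest.blowUp_of_twins {κ : A → Sym2 X} {ℓ : N → X} (h : IsForest (blowUp κ ℓ))
    {ℓ' : N' → X} (g : N' → N) (hg : ∀ n, ℓ (g n) = ℓ' n)
    (htwin : ∀ n n', n ≠ n' → g n = g n' → ∃ m, g n ≠ m ∧ ℓ (g n) = ℓ m) :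
    IsForest (blowUp κ ℓ') := by
  have hends (e : BlowUpEdge κ ℓ') : (e.ends.map g).map ℓ = κ e.origin := by
    rw [← e.map_ends, Sym2.map_map]
    exact congrArg (Sym2.map · _) (funext hg)
  let proj (e : BlowUpEdge κ ℓ') : BlowUpEdge κ ℓ := ⟨e.ends.map g, e.origin, hends e⟩
  have hproj {e x y} (he : blowUp κ ℓ' e = s(x, y)) : blowUp κ ℓ (proj e) = s(g x, g y) :=
    congrArg (Sym2.map g) he
  let L : Set N' := {n | ∃ n', n ≠ n' ∧ g n = g n'}
  have hL {n n'} (hn : n ∉ L) (h : g n = g n') : n = n' := by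
    by_contra hne
    exact hn ⟨n', hne, h⟩
  have hloop : ∀ e x y, blowUp κ ℓ' e = s(x, y) → x ∈ L → y ∉ L := by
    rintro e x y he ⟨x', hxx', hgx⟩ ⟨y', hyy', hgy⟩
    obtain ⟨n, hxn, hℓx⟩ := htwin x x' hxx' hgx
    obtain ⟨m, hym, hℓy⟩ := htwin y y' hyy' hgy
    let d : BlowUpEdge κ ℓ := ⟨s(g x, m), e.origin, by
      rw [← (proj e).map_ends, ← blowUp, hproj he, Sym2.map_mk, Sym2.map_mk, hℓy]⟩
    have hd := h.edge_unique_of_twin hxn hℓx (e' := d) (hproj he) rfl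
    exact hym (Sym2.congr_right.1 ((hproj he).symm.trans (congrArg (blowUp κ ℓ) hd)))
  refine .of_leaves L hloop ?_ (h.of_injective (j := fun e => proj e.1) ?_ g fun _ => rfl)
  · rintro x hx e e' ⟨y, he⟩ ⟨y', he'⟩
    obtain ⟨n, hxn, hℓx⟩ := let ⟨x', hxx', hgx⟩ := hx; htwin x x' hxx' hgx
    have heq : proj e = proj e' := h.edge_unique_of_twin hxn hℓx (hproj he) (hproj he')
    have hgy : g y = g y' := Sym2.congr_right.1
      ((hproj he).symm.trans ((congrArg (blowUp κ ℓ) heq).trans (hproj he')))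
    obtain rfl := hL (hloop e x y he hx) hgy
    have horigin : e.origin = e'.origin := (congrArg BlowUpEdge.origin heq :)
    exact BlowUpEdge.ext (he.trans he'.symm) horigin
  · rintro ⟨e, he⟩ ⟨e', _⟩ heq
    have hmap : e.ends.map g = e'.ends.map g := congrArg BlowUpEdge.ends heq
    have horigin : e.origin = e'.origin := (congrArg BlowUpEdge.origin heq :)
    exact Subtype.ext
      (BlowUpEdge.ext (eq_of_sym2Map_eq (fun x hx _ => hL (he x hx)) hmap) horigin)

theorem IsForest.blowUp_congr {κ : A → Sym2 X} {ℓ : N → X} {ℓ' : N' → X}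
    (hℓ : ∀ x, min 2 (fiberCard ℓ x) = min 2 (fiberCard ℓ' x)) (h : IsForest (blowUp κ ℓ)) :
    IsForest (blowUp κ ℓ') := by
  have hsection (n : N') : ∃ m, ℓ m = ℓ' n := (min_fiberCard_eq_iff.1 (hℓ _)).1.2 ⟨n, rfl⟩
  choose g hg using hsection
  refine h.blowUp_of_twins g hg fun n n' hne hgn => ?_
  obtain ⟨m, m', hmm', hm, hm'⟩ :=
    (min_fiberCard_eq_iff.1 (hℓ (ℓ' n))).2.2 ⟨n, n', hne, rfl, by rw [← hg, ← hgn, hg]⟩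
  obtain h | h := ne_or_eq (g n) m
  · exact ⟨m, h, (hg n).trans hm.symm⟩
  · exact ⟨m', h.trans_ne hmm', (hg n).trans hm'.symm⟩

theorem isForest_blowUp_congr (κ : A → Sym2 X) {ℓ : N → X} {ℓ' : N' → X}
    (h : ∀ x, min 2 (fiberCard ℓ x) = min 2 (fiberCard ℓ' x)) :
    IsForest (blowUp κ ℓ) ↔ IsForest (blowUp κ ℓ') :=
  ⟨.blowUp_congr h, .blowUp_congr fun x => (h x).symm⟩

end BlowUp

/-! ### Blow-ups of blow-ups -/

section Pullback

open Function (Pullback)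

variable {A X Y N N₀ Λ : Type*}

theorem fiberCard_pullback (c : Y → Λ) (r₀ : N₀ → Λ) (ℓ₀ : N₀ → X) (y : Y) (x : X) :
    fiberCard (fun p : Pullback c r₀ => (p.fst, ℓ₀ p.snd)) (y, x) =
      fiberCard (fun n => (r₀ n, ℓ₀ n)) (c y, x) := by
  refine fiberCard_eq_of_bijOn (f := Pullback.snd) ⟨?_, ?_, ?_⟩
  · rintro ⟨⟨y', n⟩, hp⟩ h
    obtain ⟨rfl, rfl⟩ := Prod.ext_iff.1 h
    exact Prod.ext hp.symm rfl
  · rintro ⟨⟨y', n⟩, hp⟩ h ⟨⟨y'', n'⟩, hp'⟩ h' hnn'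
    have hy : y' = y := (Prod.ext_iff.1 h).1
    have hy' : y'' = y := (Prod.ext_iff.1 h').1
    exact Subtype.ext (Prod.ext (hy.trans hy'.symm) hnn')
  · rintro n hn
    exact ⟨⟨(y, n), (Prod.ext_iff.1 hn).1.symm⟩, Prod.ext rfl (Prod.ext_iff.1 hn).2, rfl⟩

variable {K : A → Sym2 N₀} {r₀ : N₀ → Λ} {c : Y → Λ}

/-- The edge of the blow-up of `Sym2.map r₀ ∘ K` along `c` that arises from an edge of the blow-up
of `K` along the pullback of `c` by contraction of the fibres over `Y`. -/
def BlowUpEdge.ofPullback (e : BlowUpEdge K (Pullback.snd : Pullback c r₀ → N₀)) :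
    BlowUpEdge (Sym2.map r₀ ∘ K) c where
  ends := e.ends.map Pullback.fst
  origin := e.origin
  map_ends := by
    rw [Function.comp_apply, ← e.map_ends, Sym2.map_map, Sym2.map_map]
    exact congrArg (Sym2.map · _) (funext fun p => p.2)

theorem BlowUpEdge.ofPullback_surjective :
    Function.Surjective (BlowUpEdge.ofPullback (K := K) (r₀ := r₀) (c := c)) := by
  rintro ⟨⟨y, y'⟩, a, h⟩
  have h : s(c y, c y') = (K a).map r₀ := h
  induction ha : K a with | _ n n'
  rw [ha, Sym2.map_mk] at h
  rcases Sym2.eq_iff.1 h with ⟨hn, hn'⟩ | ⟨hn, hn'⟩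
  · exact ⟨⟨s(⟨(y, n), hn⟩, ⟨(y', n'), hn'⟩), a, ha.symm⟩, rfl⟩
  · exact ⟨⟨s(⟨(y, n'), hn⟩, ⟨(y', n), hn'⟩), a, Sym2.eq_swap.trans ha.symm⟩, rfl⟩

/-- Distinct edges are only identified if their ends lie over the same point of `Λ`, so that their
origin gives rise to a loop. -/
theorem BlowUpEdge.ofPullback_injective (h : IsForest (blowUp (Sym2.map r₀ ∘ K) c)) :
    Function.Injective (BlowUpEdge.ofPullback (K := K) (r₀ := r₀) (c := c)) := by
  rintro ⟨⟨p, q⟩, a, hpq⟩ ⟨⟨p', q'⟩, a', hpq'⟩ heq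
  obtain ⟨hfst, rfl⟩ := BlowUpEdge.ext_iff.1 heq
  have hpq : s(p.snd, q.snd) = K a := hpq
  have hpq' : s(p'.snd, q'.snd) = K a := hpq'
  have hc (p : Pullback c r₀) : c p.fst = r₀ p.snd := p.2
  have hloop : c p.fst ≠ c q.fst := fun hpq_eq => by
    refine h.not_eq_diag ⟨s(p.fst, p.fst), a, ?_⟩ p.fst rfl
    rw [Function.comp_apply, ← hpq, Sym2.map_mk, Sym2.map_mk, ← hc, ← hc, ← hpq_eq]
  refine BlowUpEdge.ext (Sym2.eq_iff.2 ?_) rfl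
  rcases Sym2.eq_iff.1 hfst with ⟨hp, hq⟩ | ⟨hp, hq⟩ <;>
    rcases Sym2.eq_iff.1 (hpq.trans hpq'.symm) with ⟨hp', hq'⟩ | ⟨hp', hq'⟩
  · exact .inl ⟨Subtype.ext (Prod.ext hp hp'), Subtype.ext (Prod.ext hq hq')⟩
  · have : c p.fst = c q.fst := by rw [hc, hp', ← hc, ← hq]
    exact absurd this hloop
  · have : c p.fst = c q.fst := by rw [hc, hp', ← hc, ← hq]
    exact absurd this hloop
  · exact .inr ⟨Subtype.ext (Prod.ext hp hp'), Subtype.ext (Prod.ext hq hq')⟩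

theorem isForest_pullback_iff (K : A → Sym2 N₀) (r₀ : N₀ → Λ) (c : Y → Λ) :
    IsForest (Sym2.map Pullback.fst ∘ blowUp K (Pullback.snd : Pullback c r₀ → N₀)) ↔
      IsForest (blowUp (Sym2.map r₀ ∘ K) c) := by
  constructor
  · intro h
    have hsec := Function.surjInv_eq (BlowUpEdge.ofPullback_surjective (K := K) (r₀ := r₀) (c := c))
    refine h.of_injective (Function.injective_surjInv BlowUpEdge.ofPullback_surjective) id
      fun e => ?_
    rw [Sym2.map_id]
    exact congrArg (blowUp _ c) (hsec e)
  · intro h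
    exact h.of_injective (BlowUpEdge.ofPullback_injective h) id fun e => by rw [Sym2.map_id]; rfl

theorem isForest_map_blowUp_iff (κ : A → Sym2 X) {ℓ₀ : N₀ → X} {r : N → Y} {ℓ : N → X}
    (h : ∀ y x, min 2 (fiberCard (fun n => (r n, ℓ n)) (y, x)) =
      min 2 (fiberCard (fun n => (r₀ n, ℓ₀ n)) (c y, x))) :
    IsForest (Sym2.map r ∘ blowUp κ ℓ) ↔ IsForest (blowUp (Sym2.map r₀ ∘ blowUp κ ℓ₀) c) := by
  rw [← isForest_pullback_iff, ← isForest_map_blowUp_comp_iff]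
  refine isForest_map_blowUp_congr κ fun ⟨y, x⟩ => ?_
  rw [h, ← fiberCard_pullback]
  rfl

end Pullback

/-! ### Contraction of forests -/

section Contraction

variable {E₀ E₁ N Y : Type*} {e₀ : E₀ → Sym2 N} {e₁ : E₁ → Sym2 N} {π : N → Y}

/-- The vertex functions with coboundary zero on `e₀` are those that factor through the
contraction `π` of the components of `e₀`. -/
theorem isForest_sumElim_iff (h₀ : IsForest e₀)
    (hπ : ∀ f, coboundary e₀ f = 0 ↔ ∃ g, f = g ∘ π) :
    IsForest (Sum.elim e₀ e₁) ↔ IsForest (Sym2.map π ∘ e₁) := by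
  have hsum (f : N → ZMod 2) :
      coboundary (Sum.elim e₀ e₁) f = Sum.elim (coboundary e₀ f) (coboundary e₁ f) := by
    ext (e | e) <;> rfl
  have hmap (g : Y → ZMod 2) : coboundary (Sym2.map π ∘ e₁) g = coboundary e₁ (g ∘ π) := by
    rw [coboundary_map]
    rfl
  constructor
  · intro h c
    obtain ⟨f, hf⟩ := h (Sum.elim 0 c)
    rw [hsum, Sum.elim_eq_iff] at hf
    obtain ⟨hf₀, hf₁⟩ := hf
    obtain ⟨g, rfl⟩ := (hπ f).1 hf₀
    exact ⟨g, (hmap g).trans hf₁⟩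
  · intro h c
    obtain ⟨f, hf⟩ := h₀ (c ∘ Sum.inl)
    obtain ⟨g, hg⟩ := h (c ∘ Sum.inr - coboundary e₁ f)
    refine ⟨f + g ∘ π, ?_⟩
    rw [hsum, map_add, map_add, (hπ (g ∘ π)).2 ⟨g, rfl⟩, ← hmap, hf, hg, add_zero,
      add_sub_cancel, Sum.elim_comp_inl_inr]

end Contraction

/-! ### Canonical forests and their surroundings -/

section Surroundings

variable {k : ℕ} {A W : Type*}

/-- The multigraph that consists of a labeled forest `F`, a set `W` of further vertices and the
edges between them and among them that are given by `κ`: an edge of `κ` that ends at a label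
represents an edge to each vertex of `F` with that label. -/
def surround (F : LGraph k) (κ : A → Sym2 (Fin (k + 1) ⊕ W)) :
    F.G.edgeSet ⊕ BlowUpEdge κ (Sum.map F.lab id) → Sym2 (F.V ⊕ W) :=
  Sum.elim (fun e => e.1.map Sum.inl) (blowUp κ (Sum.map F.lab id))

namespace canonForest

variable {p : Multiset (LVec k)}

/-- The path of a canonical forest that contains a given vertex. -/
def path (u : (canonForest p).V) : Fin p.toList.length := Sigma.fst u

theorem adj_succ (t : Fin p.toList.length) {i j : Fin (pathLabels (p.toList.get t)).length}
    (hij : i.val + 1 = j.val) : (canonForest p).G.Adj ⟨t, i⟩ ⟨t, j⟩ := by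
  refine (SimpleGraph.fromRel_adj _ _ _).2 ⟨fun h => ?_, .inl ⟨rfl, hij⟩⟩
  have : i = j := eq_of_heq (Sigma.mk.inj h).2
  omega

theorem adj_induction {P : (canonForest p).V → (canonForest p).V → Prop}
    (hP : ∀ u v, P u v → P v u)
    (h : ∀ (t : Fin p.toList.length) (i j : Fin (pathLabels (p.toList.get t)).length),
      i.val + 1 = j.val → P ⟨t, i⟩ ⟨t, j⟩) {u v : (canonForest p).V}
    (huv : (canonForest p).G.Adj u v) : P u v := by
  obtain ⟨t, i⟩ := u
  obtain ⟨t', j⟩ := v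
  rcases ((SimpleGraph.fromRel_adj _ _ _).1 huv).2 with ⟨ht, hij⟩ | ⟨ht, hij⟩
  · obtain rfl : t = t' := ht
    exact h t i j hij
  · obtain rfl : t' = t := ht
    exact hP _ _ (h t' j i hij)

/-- The value of `f` at a vertex is the sum of `c` over the preceding edges of its path. -/
theorem isForest_edges : IsForest fun e : (canonForest p).G.edgeSet => e.1 := by
  refine isForest_iff.2 fun c => ?_
  let c' : Sym2 (canonForest p).V → ZMod 2 := Function.extend Subtype.val c 0
  let d (t : Fin p.toList.length) (j : ℕ) : ZMod 2 :=
    if hj : j + 1 < (pathLabels (p.toList.get t)).length then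
      c' s(⟨t, ⟨j, Nat.lt_of_succ_lt hj⟩⟩, ⟨t, ⟨j + 1, hj⟩⟩) else 0
  let f : (canonForest p).V → ZMod 2 := fun u => ∑ j ∈ Finset.range u.2.val, d u.1 j
  have hf : ∀ u v, (canonForest p).G.Adj u v → f u + f v = c' s(u, v) := by
    refine fun u v => adj_induction (P := fun u v => f u + f v = c' s(u, v)) (fun u v h => ?_) ?_
    · rw [add_comm, h, Sym2.eq_swap]
    · rintro t ⟨i, hi⟩ ⟨j, hj⟩ hij
      obtain rfl : i + 1 = j := hij
      have hstep : f ⟨t, ⟨i + 1, hj⟩⟩ = f ⟨t, ⟨i, hi⟩⟩ + d t i := Finset.sum_range_succ _ _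
      rw [hstep, ← add_assoc, CharTwo.add_self_eq_zero, zero_add]
      exact dif_pos hj
  refine ⟨f, ?_⟩
  intro e u v he
  have huv : s(u, v) ∈ (canonForest p).G.edgeSet := he ▸ e.2
  rw [hf u v huv, ← he]
  exact Subtype.val_injective.extend_apply _ _ _

theorem exists_comp_path {f : (canonForest p).V → ZMod 2}
    (hf : ∀ u v, (canonForest p).G.Adj u v → f u = f v) : ∃ g, f = g ∘ path := by
  classical
  refine ⟨fun t => if h : 0 < (pathLabels (p.toList.get t)).length then f ⟨t, ⟨0, h⟩⟩ else 0, ?_⟩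
  ext ⟨t, i, hi⟩
  refine Eq.trans ?_ (dif_pos (Nat.zero_lt_of_lt hi)).symm
  induction i with
  | zero => rfl
  | succ i ih =>
    have hi' := Nat.lt_of_succ_lt hi
    exact (hf _ _ (adj_succ t (i := ⟨i, hi'⟩) (j := ⟨i + 1, hi⟩) rfl)).symm.trans (ih hi')

theorem path_eq_of_adj {u v : (canonForest p).V} (huv : (canonForest p).G.Adj u v) :
    path u = path v :=
  adj_induction (P := fun u v => path u = path v) (fun _ _ h => h.symm) (fun _ _ _ _ => rfl) huv

theorem isForest_surround_iff (κ : A → Sym2 (Fin (k + 1) ⊕ W)) :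
    IsForest (surround (canonForest p) κ) ↔
      IsForest (Sym2.map (Sum.map path id) ∘ blowUp κ (Sum.map (canonForest p).lab id)) := by
  have hcob (f : (canonForest p).V ⊕ W → ZMod 2) {u v} (huv : (canonForest p).G.Adj u v) :
      coboundary (fun e : (canonForest p).G.edgeSet => e.1.map Sum.inl) f ⟨s(u, v), huv⟩ =
        f (.inl u) + f (.inl v) := coboundary_apply (Sym2.map_mk ..) f
  refine isForest_sumElim_iff ?_ fun f => ⟨fun hf => ?_, ?_⟩
  · exact isForest_edges.map_injective Sum.inl_injective
  · have hadj u v (huv : (canonForest p).G.Adj u v) : f (.inl u) = f (.inl v) := by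
      have := congrFun hf ⟨s(u, v), huv⟩
      rwa [hcob f huv, Pi.zero_apply, CharTwo.add_eq_zero] at this
    obtain ⟨g, hg⟩ := exists_comp_path hadj
    refine ⟨Sum.elim g (f ∘ Sum.inr), ?_⟩
    ext (u | w)
    · exact congrFun hg u
    · rfl
  · rintro ⟨g, rfl⟩
    ext ⟨e, he⟩
    induction e with
    | _ u v =>
      rw [hcob _ he, Pi.zero_apply, CharTwo.add_eq_zero]
      exact congrArg (g ∘ Sum.inl) (path_eq_of_adj he)

end canonForest

end Surroundings

/-! ### Families of vectors -/

section VectorFamily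

variable {k : ℕ} {A T T' U W X Z : Type*}

/-- The vertices of the disjoint union of the paths of a family of vectors. The canonical forest of
`p` is the case `c = p.toList.get`. -/
abbrev PathVertex (c : T → LVec k) : Type _ := Σ t, Fin (pathLabels (c t)).length

/-- The label of a vertex on the path of a vector of the family. -/
def PathVertex.label {c : T → LVec k} (u : PathVertex c) : Fin (k + 1) :=
  (pathLabels (c u.1)).get u.2

theorem count_pathLabels (v : LVec k) (a : Fin (k + 1)) : (pathLabels v).count a = v a := by
  simp only [pathLabels, List.count_flatMap, Function.comp_def, List.count_replicate, beq_iff_eq]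
  rw [← List.ofFn_eq_map, List.sum_ofFn, Finset.sum_ite_eq' Finset.univ a fun j => (v j : ℕ),
    if_pos (Finset.mem_univ a)]

theorem fiberCard_eq_card [Fintype T] [DecidableEq Z] (c : T → Z) (z : Z) :
    fiberCard c z = (Finset.univ.filter fun t => c t = z).card := by
  rw [fiberCard, ← Set.encard_coe_eq_coe_finsetCard]
  congr
  ext t
  simp

theorem fiberCard_eq_count [Fintype T] [DecidableEq Z] (c : T → Z) (z : Z) :
    fiberCard c z = (Finset.univ.val.map c).count z := by
  rw [fiberCard_eq_card, Multiset.count_map]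
  simp only [eq_comm (a := z)]
  rfl

theorem fiberCard_get [DecidableEq Z] (l : List Z) (z : Z) : fiberCard l.get z = l.count z := by
  rw [fiberCard_eq_count, Fin.univ_val_map, List.ofFn_get, Multiset.coe_count]

theorem fiberCard_path_label [Fintype T] [DecidableEq Z] (c : T → LVec k) (φ : T → Z) (z : Z)
    (a : Fin (k + 1)) : fiberCard (fun u : PathVertex c => (φ u.1, u.label)) (z, a) =
      ((∑ t with φ t = z, (c t a : ℕ) : ℕ) : ℕ∞) := by
  have hlabel (t : T) :
      (Finset.univ.filter fun i => (pathLabels (c t)).get i = a).card = c t a := by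
    rw [← count_pathLabels, ← ENat.natCast_inj, ← fiberCard_eq_card, fiberCard_get]
  rw [fiberCard_eq_card, Finset.card_filter, Fintype.sum_sigma, Finset.sum_filter]
  congr 1
  refine Finset.sum_congr rfl fun t _ => ?_
  rw [← hlabel, Finset.card_filter]
  by_cases ht : φ t = z <;> simp [ht, PathVertex.label]

theorem min_two_val (i : Fin 3) : min 2 ((i : ℕ) : ℕ∞) = (i : ℕ) :=
  min_eq_right (by exact_mod_cast Nat.le_of_lt_succ i.2)

theorem fiberCard_path_label_self (c : T → LVec k) (t : T) (a : Fin (k + 1)) :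
    fiberCard (fun u : PathVertex c => (u.1, u.label)) (t, a) = (c t a : ℕ) := by
  rw [← count_pathLabels, ← fiberCard_get]
  refine (fiberCard_eq_of_bijOn (f := Sigma.mk t) ⟨?_, ?_, ?_⟩).symm
  · rintro i rfl
    rfl
  · exact sigma_mk_injective.injOn
  · rintro ⟨t', i⟩ h
    obtain ⟨rfl, hi⟩ := Prod.ext_iff.1 h
    exact ⟨i, hi, rfl⟩

theorem fiberCard_pair_sumMap (r : U → T) (ℓ : U → X) (y : T ⊕ W) (x : X ⊕ W) :
    fiberCard (fun n : U ⊕ W => (Sum.map r id n, Sum.map ℓ id n)) (y, x) =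
      match y, x with
      | .inl t, .inl a => fiberCard (fun u => (r u, ℓ u)) (t, a)
      | .inr w, .inr w' => fiberCard (fun w : W => (w, w)) (w, w')
      | _, _ => 0 := by
  let J : (T × X) ⊕ (W × W) → (T ⊕ W) × (X ⊕ W) :=
    Sum.elim (Prod.map Sum.inl Sum.inl) (Prod.map Sum.inr Sum.inr)
  have hJ : J.Injective := by rintro (⟨t, a⟩ | ⟨w, w'⟩) (⟨t', a'⟩ | ⟨v, v'⟩) h <;> simp_all [J]
  have hpair : (fun n : U ⊕ W => (Sum.map r id n, Sum.map ℓ id n)) =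
      J ∘ Sum.map (fun u => (r u, ℓ u)) (fun w : W => (w, w)) := by
    ext1 (u | w) <;> rfl
  rw [hpair]
  match y, x with
  | .inl t, .inl a =>
    exact (fiberCard_injective_comp hJ _ (.inl (t, a))).trans (fiberCard_sumMap_inl ..)
  | .inr w, .inr w' =>
    exact (fiberCard_injective_comp hJ _ (.inr (w, w'))).trans (fiberCard_sumMap_inr ..)
  | .inl t, .inr w => exact fiberCard_of_forall_ne fun n => by cases n <;> simp [J]
  | .inr w, .inl a => exact fiberCard_of_forall_ne fun n => by cases n <;> simp [J]

/-- The multigraph on the vectors and the set `W` that `κ` defines: contracting the path of each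
vector of a family `c` in its surroundings given by `κ` yields the blow-up along `c` of this
multigraph. -/
def vectorGraph (κ : A → Sym2 (Fin (k + 1) ⊕ W)) :
    BlowUpEdge κ (Sum.map (PathVertex.label (c := (id : LVec k → LVec k))) id) →
      Sym2 (LVec k ⊕ W) :=
  Sym2.map (Sum.map Sigma.fst id) ∘ blowUp κ (Sum.map PathVertex.label id)

theorem isForest_map_blowUp_iff_vectorGraph (κ : A → Sym2 (Fin (k + 1) ⊕ W)) {c : T → LVec k}
    {r : U → T} {ℓ : U → Fin (k + 1)}
    (h : ∀ t a, min 2 (fiberCard (fun u => (r u, ℓ u)) (t, a)) = (c t a : ℕ)) :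
    IsForest (Sym2.map (Sum.map r id) ∘ blowUp κ (Sum.map ℓ id)) ↔
      IsForest (blowUp (vectorGraph κ) (Sum.map c id)) := by
  refine isForest_map_blowUp_iff κ fun y x => ?_
  rw [fiberCard_pair_sumMap, fiberCard_pair_sumMap]
  match y, x with
  | .inl t, .inl a => exact (h t a).trans (by
      rw [← min_two_val (c t a)]; exact congrArg _ (fiberCard_path_label_self id (c t) a).symm)
  | .inr _, .inr _ | .inl _, .inr _ | .inr _, .inl _ => rfl

theorem isForest_surround_canonForest_iff (κ : A → Sym2 (Fin (k + 1) ⊕ W))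
    (p : Multiset (LVec k)) : IsForest (surround (canonForest p) κ) ↔
      IsForest (blowUp (vectorGraph κ) (Sum.map p.toList.get id)) := by
  rw [canonForest.isForest_surround_iff]
  refine isForest_map_blowUp_iff_vectorGraph κ fun t a => ?_
  exact (congrArg (min 2) (fiberCard_path_label_self p.toList.get t a)).trans (min_two_val _)

theorem count_twoUnion {α : Type} [DecidableEq α] (m m' : Multiset α) (z : α) :
    (twoUnion m m').count z = min 2 (m.count z + m'.count z) := by
  simp only [twoUnion, cap2, Multiset.count_bind, Multiset.count_replicate, ← Multiset.count_add]
  rw [← Multiset.toFinset_val, ← Finset.sum_eq_multiset_sum, Finset.sum_ite_eq']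
  split_ifs with hz
  · rfl
  · rw [Multiset.count_eq_zero_of_notMem (mt Multiset.mem_toFinset.2 hz)]
    rfl

theorem fiberCard_toList_get {α : Type} [DecidableEq α] (m : Multiset α) (z : α) :
    fiberCard m.toList.get z = m.count z := by
  rw [fiberCard_get, ← Multiset.coe_count, Multiset.coe_toList]

theorem min_fiberCard_twoUnion [Fintype T] (u : T → LVec k) (R : Multiset (LVec k)) (v : LVec k) :
    min 2 (fiberCard (twoUnion (Finset.univ.val.map u) R).toList.get v) =
      min 2 (fiberCard (Sum.elim u R.toList.get) v) := by
  rw [fiberCard_sumElim, fiberCard_toList_get, fiberCard_toList_get, fiberCard_eq_count,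
    count_twoUnion, Nat.mono_cast.map_min, Nat.cast_ofNat, Nat.cast_add, ← min_assoc, min_self]

theorem isForest_surround_twoUnion_iff [Fintype T] [Fintype T'] [DecidableEq T']
    (κ : A → Sym2 (Fin (k + 1) ⊕ W)) {v : T → LVec k} {u : T' → LVec k} {φ : T → T'}
    (hu : ∀ t' a, (u t' a : ℕ) = min 2 (∑ t with φ t = t', (v t a : ℕ))) (R : Multiset (LVec k)) :
    IsForest (surround (canonForest (twoUnion (Finset.univ.val.map u) R)) κ) ↔
      IsForest (Sym2.map (Sum.map (Sum.map φ id) id) ∘ (Sym2.map (Sum.map Sigma.fst id) ∘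
        blowUp κ (Sum.map (PathVertex.label (c := Sum.elim v R.toList.get)) id))) := by
  have hlabel (t' : T' ⊕ Fin R.toList.length) (a : Fin (k + 1)) :
      min 2 (fiberCard (fun x : PathVertex (Sum.elim v R.toList.get) =>
        (Sum.map φ id x.1, x.label)) (t', a)) = (Sum.elim u R.toList.get t' a : ℕ) := by
    refine (congrArg (min 2) (fiberCard_path_label _ (Sum.map φ id) t' a)).trans ?_
    rw [Finset.sum_filter, Fintype.sum_sum_type]
    match t' with
    | .inl i =>
      simp only [Sum.map_inl, Sum.map_inr, Sum.elim_inl, Sum.inl.injEq, reduceCtorEq, if_false,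
        Finset.sum_const_zero, add_zero, hu, Finset.sum_filter]
      exact Nat.mono_cast.map_min.symm
    | .inr j =>
      simp only [Sum.map_inl, Sum.map_inr, Sum.elim_inr, Sum.inr.injEq, reduceCtorEq, if_false,
        Finset.sum_const_zero, zero_add, id, Finset.sum_ite_eq', Finset.mem_univ, if_true]
      exact min_two_val _
  rw [isForest_surround_canonForest_iff, ← Function.comp_assoc, ← Sym2.map_comp, Sum.map_comp_map]
  refine Iff.trans (isForest_blowUp_congr _ fun x => ?_)
    (isForest_map_blowUp_iff_vectorGraph κ hlabel).symm
  match x with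
  | .inl v =>
    rw [fiberCard_sumMap_inl, fiberCard_sumMap_inl, min_fiberCard_twoUnion]
  | .inr w => rw [fiberCard_sumMap_inr, fiberCard_sumMap_inr]

end VectorFamily

/-! ### Parity -/

section Parity

variable {R P M N : Type*} [Ring R] [AddCommGroup P] [Module R P] [AddCommGroup M] [Module R M]
  [AddCommGroup N] [Module R N]

open Classical in
theorem ncard_setOf_fin_succ {n : ℕ} (p : Fin (n + 1) → Prop) :
    {i | p i}.ncard = (if p 0 then 1 else 0) + {i : Fin n | p i.succ}.ncard := by
  rw [Set.ncard_eq_toFinset_card', Set.ncard_eq_toFinset_card', Set.toFinset_ofPred,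
    Set.toFinset_ofPred, Fin.card_filter_univ_succ]
  split_ifs
  · exact add_comm _ _
  · exact (zero_add _).symm

theorem map_ker_eq_top_comm {f : P →ₗ[R] M} {g : P →ₗ[R] N} (hf : Function.Surjective f)
    (hg : Function.Surjective g) :
    (LinearMap.ker g).map f = ⊤ ↔ (LinearMap.ker f).map g = ⊤ := by
  rw [LinearMap.map_eq_top_iff (LinearMap.range_eq_top.2 hf),
    LinearMap.map_eq_top_iff (LinearMap.range_eq_top.2 hg), sup_comm]

theorem eq_top_iff_of_zmod_two_prod (I : Submodule (ZMod 2) (ZMod 2 × ZMod 2)) :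
    I = ⊤ ↔ (1, 0) ∈ I ∧ (0, 1) ∈ I := by
  refine ⟨by rintro rfl; simp, fun ⟨h₁, h₂⟩ => (Submodule.eq_top_iff').2 fun x => ?_⟩
  simpa using I.add_mem (I.smul_mem x.1 h₁) (I.smul_mem x.2 h₂)

/-- Of the three nonzero functionals on `𝔽₂²`, exactly three, two or none are nonzero on a subspace
of dimension two, one or zero. -/
theorem even_ncard_map_prod_eq_top (I : Submodule (ZMod 2) (ZMod 2 × ZMod 2)) :
    Even {i : Fin 4 | ![I.map (LinearMap.fst ..) = ⊤, I.map (LinearMap.snd ..) = ⊤,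
      I.map (LinearMap.fst .. + LinearMap.snd ..) = ⊤, I = ⊤] i}.ncard := by
  classical
  have hab : (1, 0) ∈ I → (0, 1) ∈ I → (1, 1) ∈ I := I.add_mem
  have hbc : (0, 1) ∈ I → (1, 1) ∈ I → (1, 0) ∈ I := I.add_mem
  have hac : (1, 0) ∈ I → (1, 1) ∈ I → (0, 1) ∈ I := I.add_mem
  have hmap (ℓ : ZMod 2 × ZMod 2 →ₗ[ZMod 2] ZMod 2) : I.map ℓ = ⊤ ↔ ∃ x ∈ I, ℓ x = 1 :=
    (Ideal.eq_top_iff_one _).trans Submodule.mem_map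
  have hall (p : ZMod 2 × ZMod 2 → Prop) :
      (∃ x, p x) ↔ p (0, 0) ∨ p (1, 0) ∨ p (0, 1) ∨ p (1, 1) := by
    have hZ (q : ZMod 2 → Prop) : (∃ a, q a) ↔ q 0 ∨ q 1 := Fin.exists_fin_two
    simp only [Prod.exists, hZ, or_assoc, or_left_comm]
  simp only [ncard_setOf_fin_succ, hmap, hall, eq_top_iff_of_zmod_two_prod]
  clear hmap hall
  by_cases ha : (1, 0) ∈ I <;> by_cases hb : (0, 1) ∈ I <;> by_cases hc : (1, 1) ∈ I <;>
    simp_all [Nat.even_iff]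

theorem even_ncard_map_ker_eq_top [Module (ZMod 2) P] [Module (ZMod 2) M]
    (δ : P →ₗ[ZMod 2] M) {ℓ₁ ℓ₂ : P →ₗ[ZMod 2] ZMod 2} (hℓ : Function.Surjective (ℓ₁.prod ℓ₂)) :
    Even {i : Fin 4 | (![LinearMap.ker ℓ₁, LinearMap.ker ℓ₂, LinearMap.ker (ℓ₁ + ℓ₂),
      LinearMap.ker ℓ₁ ⊓ LinearMap.ker ℓ₂] i).map δ = ⊤}.ncard := by
  by_cases hδ : Function.Surjective δ
  · have h₁ : Function.Surjective ℓ₁ := Prod.fst_surjective.comp hℓ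
    have h₂ : Function.Surjective ℓ₂ := Prod.snd_surjective.comp hℓ
    have h₁₂ : Function.Surjective (ℓ₁ + ℓ₂) := fun a =>
      (hℓ (a, 0)).imp fun x hx => by
        obtain ⟨hx₁, hx₂⟩ := Prod.ext_iff.1 hx
        exact (congrArg₂ _ hx₁ hx₂).trans (add_zero a)
    refine (congrArg (Even ∘ Set.ncard) (Set.ext fun i => ?_)).mp
      (even_ncard_map_prod_eq_top ((LinearMap.ker δ).map (ℓ₁.prod ℓ₂)))
    fin_cases i
    · simp [map_ker_eq_top_comm hδ h₁, ← Submodule.map_comp]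
    · simp [map_ker_eq_top_comm hδ h₂, ← Submodule.map_comp]
    · simp [map_ker_eq_top_comm hδ h₁₂, ← Submodule.map_comp, LinearMap.add_comp]
    · simp [← LinearMap.ker_prod, map_ker_eq_top_comm hδ hℓ]
  · have hne (q : Submodule (ZMod 2) P) : q.map δ ≠ ⊤ := fun hq =>
      hδ (LinearMap.range_eq_top.1 (top_le_iff.1 (hq.ge.trans LinearMap.map_le_range)))
    simp only [hne]
    simp

theorem isForest_map_sumMap_iff {E T T' I W : Type*} (φ : T → T') (ends : E → Sym2 ((T ⊕ I) ⊕ W))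
    {q : Submodule (ZMod 2) ((T ⊕ I) ⊕ W → ZMod 2)}
    (hq : ∀ f, f ∈ q ↔ ∀ s t, φ s = φ t → f (.inl (.inl s)) = f (.inl (.inl t))) :
    IsForest (Sym2.map (Sum.map (Sum.map φ id) id) ∘ ends) ↔ q.map (coboundary ends) = ⊤ := by
  have hrange : q = LinearMap.range
      (LinearMap.funLeft (ZMod 2) (ZMod 2) (Sum.map (Sum.map φ (id : I → I)) (id : W → W))) := by
    refine Submodule.ext fun f => (hq f).trans (Iff.trans ⟨fun h => ?_, fun h s t hst => ?_⟩
      ((Function.factorsThrough_iff f).trans (exists_congr fun g => eq_comm)))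
    · rintro ((s | i) | w) ((t | j) | v) hst <;>
        simp only [Sum.map_inl, Sum.map_inr, Sum.inl.injEq, Sum.inr.injEq, reduceCtorEq, id] at hst
      · exact h s t hst
      · rw [hst]
      · rw [hst]
    · exact h (congrArg (Sum.inl ∘ Sum.inl) hst)
  rw [IsForest, coboundary_map, ← LinearMap.range_eq_top, LinearMap.range_comp, ← hrange]

theorem even_ncard_isForest_map_fin_three {E I W : Type*} (ends : E → Sym2 ((Fin 3 ⊕ I) ⊕ W)) :
    Even {i : Fin 4 | ![IsForest (Sym2.map (Sum.map (Sum.map ![(0 : Fin 2), 1, 1] id) id) ∘ ends),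
      IsForest (Sym2.map (Sum.map (Sum.map ![(1 : Fin 2), 0, 1] id) id) ∘ ends),
      IsForest (Sym2.map (Sum.map (Sum.map ![(1 : Fin 2), 1, 0] id) id) ∘ ends),
      IsForest (Sym2.map (Sum.map (Sum.map ![(0 : Fin 1), 0, 0] id) id) ∘ ends)] i}.ncard := by
  let x (t : Fin 3) : ((Fin 3 ⊕ I) ⊕ W → ZMod 2) →ₗ[ZMod 2] ZMod 2 :=
    LinearMap.proj (Sum.inl (Sum.inl t))
  have hsurj : Function.Surjective ((x 1 + x 2).prod (x 0 + x 2)) := fun ⟨a, b⟩ =>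
    ⟨Sum.elim (Sum.elim ![b, a, 0] 0) 0, by simp [x]⟩
  refine (congrArg (Even ∘ Set.ncard) (Set.ext fun i => ?_)).mp
    (even_ncard_map_ker_eq_top (coboundary ends) hsurj)
  have hadd : x 1 + x 2 + (x 0 + x 2) = x 1 + x 0 := by
    have hself : x 2 + x 2 = 0 := LinearMap.ext fun f => CharTwo.add_self_eq_zero (x 2 f)
    rw [add_add_add_comm, hself, add_zero]
  have hker {s t f} : f ∈ LinearMap.ker (x s + x t) ↔ x s f = x t f := CharTwo.add_eq_zero
  fin_cases i <;> refine (isForest_map_sumMap_iff _ ends fun f => ?_).symm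
  · exact hker.trans (by simpa [Fin.forall_fin_succ, x] using Eq.symm)
  · exact hker.trans (by simpa [Fin.forall_fin_succ, x] using Eq.symm)
  · exact (hadd ▸ hker).trans (by simpa [Fin.forall_fin_succ, x] using Eq.symm)
  · refine ⟨fun h s t _ => ?_, fun h => ⟨hker.2 (h 1 2 rfl), hker.2 (h 0 2 rfl)⟩⟩
    have hx : ∀ r, x r f = x 2 f := by
      intro r
      fin_cases r
      exacts [hker.1 h.2, hker.1 h.1, rfl]
    exact (hx s).trans (hx t).symm

end Parity

/-- The multisets `p₁, …, p₄` of the theorem. -/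
def mergedPatterns {k : ℕ} (v₁ v₂ v₃ : LVec k) (R : Multiset (LVec k)) :
    Fin 4 → Multiset (LVec k) :=
  ![twoUnion {v₁, twoSum v₂ v₃} R, twoUnion {v₂, twoSum v₁ v₃} R, twoUnion {v₃, twoSum v₁ v₂} R,
    twoUnion {twoSum (twoSum v₁ v₂) v₃} R]

theorem even_ncard_isForest_surround {k : ℕ} {A W : Type*} (κ : A → Sym2 (Fin (k + 1) ⊕ W))
    (v₁ v₂ v₃ : LVec k) (R : Multiset (LVec k)) :
    Even {i | IsForest (surround (canonForest (mergedPatterns v₁ v₂ v₃ R i)) κ)}.ncard := by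
  refine (congrArg (Even ∘ Set.ncard) (Set.ext fun i => ?_)).mp
    (even_ncard_isForest_map_fin_three (Sym2.map (Sum.map Sigma.fst id) ∘ blowUp κ
      (Sum.map (PathVertex.label (c := Sum.elim ![v₁, v₂, v₃] R.toList.get)) id)))
  have hcap (m n : ℕ) : min 2 (min 2 m + n) = min 2 (m + n) := by omega
  fin_cases i
  · exact (isForest_surround_twoUnion_iff κ (u := ![v₁, twoSum v₂ v₃]) (fun t a => by
      fin_cases t <;> simp [Finset.sum_filter, Fin.sum_univ_succ, twoSum, Fin.is_le]) R).symm
  · exact (isForest_surround_twoUnion_iff κ (u := ![v₂, twoSum v₁ v₃]) (fun t a => by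
      fin_cases t <;> simp [Finset.sum_filter, Fin.sum_univ_succ, twoSum, Fin.is_le]) R).symm
  · exact (isForest_surround_twoUnion_iff κ (u := ![v₃, twoSum v₁ v₂]) (fun t a => by
      fin_cases t <;> simp [Finset.sum_filter, Fin.sum_univ_succ, twoSum, Fin.is_le]) R).symm
  · exact (isForest_surround_twoUnion_iff κ (u := ![twoSum (twoSum v₁ v₂) v₃]) (fun t a => by
      fin_cases t; simp [Finset.sum_filter, Fin.sum_univ_succ, twoSum, hcap, add_assoc]) R).symm

/-! ### Glueings -/

/-- The graph with one vertex for each label and no edges. The edges that a glueing or a clique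
extension adds to a labeled graph form a blow-up of those that it adds to this graph. -/
abbrev edgeless (k : ℕ) : LGraph k where
  V := Fin (k + 1)
  G := ⊥
  lab := id

namespace GlueEdge

variable {k : ℕ} {F : LGraph k} {d : ExtDatum k}

/-- An edge of the glueing, as an edge of `F` or an edge of the blow-up of the glueing of the
edgeless graph. -/
def toSurround : GlueEdge F d →
    F.G.edgeSet ⊕ BlowUpEdge (GlueEdge.ends (F := edgeless k) (d := d)) (Sum.map F.lab id)
  | .ofForest e => .inl e
  | .ofDatum e => .inr ⟨e.1.map .inr, .ofDatum e, Sym2.map_map _⟩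
  | .ofJ e => .inr ⟨e.1.map .inl,
      .ofJ ⟨e.1.map F.lab, let ⟨u, v, he, h⟩ := e.2; ⟨F.lab u, F.lab v, by rw [he]; rfl, h⟩⟩,
      (Sym2.map_map e.1).trans (Sym2.map_map (f := F.lab) (g := Sum.inl) e.1).symm⟩
  | .ofL e => .inr ⟨s(.inr e.1.1, .inl e.1.2), .ofL ⟨(e.1.1, F.lab e.1.2), e.2⟩, rfl⟩

theorem surround_toSurround (e : GlueEdge F d) :
    surround F (GlueEdge.ends (F := edgeless k) (d := d)) e.toSurround = e.ends := by
  cases e <;> rfl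

theorem toSurround_injective : Function.Injective (toSurround (F := F) (d := d)) := by
  intro e e' h
  rcases e with e | e | e | e <;> rcases e' with e' | e' | e' | e' <;>
    simp only [toSurround, reduceCtorEq, Sum.inl.injEq, Sum.inr.injEq, BlowUpEdge.ext_iff,
      ofDatum.injEq, and_false] at h
  · rw [h]
  · rw [h.2]
  · exact congrArg ofJ (Subtype.ext (Sym2.map.injective Sum.inl_injective h.1))
  · obtain ⟨hw, hv⟩ | ⟨hw, -⟩ := Sym2.eq_iff.1 h.1
    · exact congrArg ofL (Subtype.ext (Prod.ext (Sum.inr_injective hw) (Sum.inl_injective hv)))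
    · exact absurd hw Sum.inr_ne_inl

theorem toSurround_surjective : Function.Surjective (toSurround (F := F) (d := d)) := by
  rintro (e | ⟨s, e | e | ⟨-, i, j, rfl, hij⟩ | ⟨⟨w, i⟩, hi⟩, hs⟩)
  · exact ⟨.ofForest e, rfl⟩
  · exact (SimpleGraph.edgeSet_bot.subset e.2).elim
  · refine ⟨.ofDatum e, congrArg Sum.inr (BlowUpEdge.ext ?_ rfl)⟩
    obtain ⟨⟨w, w'⟩, he⟩ := e
    obtain ⟨_ | _, _ | _, rfl, ⟨⟩, ⟨⟩⟩ := exists_of_sym2Map_eq hs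
    rfl
  · obtain ⟨u | _, v | _, rfl, ⟨⟩, ⟨⟩⟩ := exists_of_sym2Map_eq hs
    exact ⟨.ofJ ⟨s(u, v), u, v, rfl, hij⟩, rfl⟩
  · obtain ⟨_ | w, v | _, rfl, ⟨⟩, ⟨⟩⟩ := exists_of_sym2Map_eq hs
    exact ⟨.ofL ⟨(w, v), hi⟩, rfl⟩

theorem isForest_ends_iff : IsForest (GlueEdge.ends (F := F) (d := d)) ↔
    IsForest (surround F (GlueEdge.ends (F := edgeless k) (d := d))) := by
  have hends : GlueEdge.ends (F := F) (d := d) =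
      surround F (GlueEdge.ends (F := edgeless k) (d := d)) ∘ toSurround :=
    funext fun e => (surround_toSurround e).symm
  rw [hends]
  refine isForest_comp_congr (b := id) _ fun z => congrArg (min 2)
    (fiberCard_eq_of_bijOn (f := toSurround) ?_)
  exact ⟨fun _ => id, toSurround_injective.injOn, fun e he =>
    let ⟨e', he'⟩ := toSurround_surjective e
    ⟨e', he'.trans he, he'⟩⟩

theorem finite [Finite F.V] : Finite (GlueEdge F d) := by
  have := d.finW
  refine .of_surjective (Sum.elim (Sum.elim ofForest ofDatum) (Sum.elim ofJ ofL)) ?_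
  rintro (e | e | e | e)
  exacts [⟨.inl (.inl e), rfl⟩, ⟨.inl (.inr e), rfl⟩, ⟨.inr (.inl e), rfl⟩, ⟨.inr (.inr e), rfl⟩]

end GlueEdge

instance canonForest.finite {k : ℕ} (p : Multiset (LVec k)) : Finite (canonForest p).V :=
  inferInstanceAs (Finite (Σ i : Fin p.toList.length, Fin (pathLabels (p.toList.get i)).length))

theorem even_ncard_glue_hasNoCycle {k : ℕ} (v₁ v₂ v₃ : LVec k) (R : Multiset (LVec k))
    (d : ExtDatum k) :
    Even {i | (glue (canonForest (mergedPatterns v₁ v₂ v₃ R i)) d).HasNoCycle}.ncard := by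
  refine (congrArg (Even ∘ Set.ncard) (Set.ext fun i => ?_)).mp
    (even_ncard_isForest_surround (GlueEdge.ends (F := edgeless k) (d := d)) v₁ v₂ v₃ R)
  have := GlueEdge.finite (F := canonForest (mergedPatterns v₁ v₂ v₃ R i)) (d := d)
  exact (multigraphOfEnds_hasNoCycle_iff.trans GlueEdge.isForest_ends_iff).symm

/-! ### Clique extensions -/

theorem fiberCard_map_eq_add {E E' E₀ N N' M M' : Type*} {i : N → M} {i' : N' → M'}
    (hi : Function.Injective i) (hi' : Function.Injective i') {p : N → N'} {q : M → M'}
    (hsq : ∀ n, q (i n) = i' (p n)) (hcart : ∀ y n', q y = i' n' → ∃ n, i n = y)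
    {a : E → Sym2 N} {a' : E' → Sym2 N'} {a₀ : E₀ → Sym2 N}
    (h : ∀ t, fiberCard a t = fiberCard a₀ t + fiberCard a' (t.map p)) (s : Sym2 M) :
    fiberCard (Sym2.map i ∘ a) s =
      fiberCard (Sym2.map i ∘ a₀) s + fiberCard (Sym2.map i' ∘ a') (s.map q) := by
  by_cases hs : ∃ t, Sym2.map i t = s
  · obtain ⟨t, rfl⟩ := hs
    have ht : (t.map i).map q = (t.map p).map i' := by
      rw [Sym2.map_map, Sym2.map_map]
      exact congrArg (Sym2.map · t) (funext hsq)
    rw [ht, fiberCard_injective_comp (Sym2.map.injective hi),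
      fiberCard_injective_comp (Sym2.map.injective hi),
      fiberCard_injective_comp (Sym2.map.injective hi'), h]
  · rw [fiberCard_of_forall_ne (a := Sym2.map i ∘ a) fun e he => hs ⟨_, he⟩,
      fiberCard_of_forall_ne (a := Sym2.map i ∘ a₀) fun e he => hs ⟨_, he⟩,
      fiberCard_of_forall_ne, add_zero]
    intro e he
    induction s with
    | _ y z =>
      obtain ⟨n, n', -, hy, hz⟩ := exists_of_sym2Map_eq (he.trans (Sym2.map_mk ..))
      obtain ⟨n₁, rfl⟩ := hcart y n hy.symm
      obtain ⟨n₂, rfl⟩ := hcart z n' hz.symm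
      exact hs ⟨s(n₁, n₂), rfl⟩

namespace ExtGraph

/-- The edges of `G` are those of the family `x` and those of the blow-up of `H` along the
label-preserving map `m`. -/
structure IsBlowUp (G H : ExtGraph) (m : G.V → H.V) {E₀ : Type} (x : E₀ → Sym2 (Option G.V)) :
    Prop where
  lab_map (v : G.V) : H.lab (m v) = G.lab v
  fiberCard_ends (s : Sym2 (Option G.V)) :
    fiberCard G.ends s = fiberCard x s + fiberCard H.ends (s.map (Option.map m))

namespace IsBlowUp

variable {G H G' H' : ExtGraph} {m : G.V → H.V} {m' : G'.V → H'.V} {E₀ E₀' : Type}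
  {x : E₀ → Sym2 (Option G.V)} {x' : E₀' → Sym2 (Option G'.V)}

theorem refl (G : ExtGraph) : G.IsBlowUp G id (Empty.elim : Empty → _) where
  lab_map _ := rfl
  fiberCard_ends s := by
    rw [fiberCard_of_forall_ne (a := Empty.elim) fun e => e.elim, zero_add, Option.map_id,
      Sym2.map_id, id]

theorem congr (h : G.IsBlowUp H m x) {E₁ : Type} {y : E₁ → Sym2 (Option G.V)}
    (hxy : ∀ s, fiberCard x s = fiberCard y s) : G.IsBlowUp H m y where
  lab_map := h.lab_map
  fiberCard_ends s := (h.fiberCard_ends s).trans (congrArg (· + _) (hxy s))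

theorem relabel (h : G.IsBlowUp H m x) (i j : ℕ+) :
    (G.relabel i j).IsBlowUp (H.relabel i j) m x where
  lab_map v := congrArg (fun l => if l = i then j else l) (h.lab_map v)
  fiberCard_ends := h.fiberCard_ends

theorem join (h : G.IsBlowUp H m x) {i j : ℕ+} (hij : i ≠ j) :
    (G.join i j).IsBlowUp (H.join i j) m x where
  lab_map := h.lab_map
  fiberCard_ends (s : Sym2 (Option G.V)) := by
    change fiberCard (Sum.elim G.ends _) s =
      fiberCard x s + fiberCard (Sum.elim H.ends _) (s.map (Option.map m))
    rw [fiberCard_sumElim, fiberCard_sumElim, h.fiberCard_ends, add_assoc]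
    refine congrArg (fun n => _ + (_ + n)) (fiberCard_eq_of_bijOn
      (f := fun e => ⟨(m e.1.1, m e.1.2), by simpa only [h.lab_map] using e.2⟩) ⟨?_, ?_, ?_⟩)
    · rintro e rfl
      rfl
    · rintro ⟨⟨u, v⟩, hu, hv⟩ rfl ⟨⟨u', v'⟩, hu', hv'⟩ he -
      obtain ⟨hu'u, hv'v⟩ | ⟨hu'v, -⟩ := Sym2.eq_iff.1 he
      · exact Subtype.ext (Prod.ext (Option.some.inj hu'u).symm (Option.some.inj hv'v).symm)
      · exact absurd (hu'.symm.trans ((congrArg G.lab (Option.some.inj hu'v)).trans hv)) hij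
    · rintro ⟨⟨a, b⟩, ha, hb⟩ he
      obtain ⟨_ | u, _ | v, rfl, ⟨⟩, ⟨⟩⟩ := exists_of_sym2Map_eq he.symm
      rw [h.lab_map] at ha hb
      exact ⟨⟨(u, v), ha, hb⟩, rfl, rfl⟩

theorem union (h : G.IsBlowUp H m x) (h' : G'.IsBlowUp H' m' x') :
    (G.union G').IsBlowUp (H.union H') (Sum.map m m') (Sum.elim
      (Sym2.map (Option.map Sum.inl) ∘ x) (Sym2.map (Option.map Sum.inr) ∘ x')) where
  lab_map := by
    rintro (v | v)
    exacts [h.lab_map v, h'.lab_map v]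
  fiberCard_ends (s : Sym2 (Option (G.V ⊕ G'.V))) := by
    change fiberCard (Sum.elim (Sym2.map (Option.map Sum.inl) ∘ G.ends)
        (Sym2.map (Option.map Sum.inr) ∘ G'.ends)) s =
      fiberCard (Sum.elim (Sym2.map (Option.map Sum.inl) ∘ x)
        (Sym2.map (Option.map Sum.inr) ∘ x')) s +
      fiberCard (Sum.elim (Sym2.map (Option.map Sum.inl) ∘ H.ends)
        (Sym2.map (Option.map Sum.inr) ∘ H'.ends)) (s.map (Option.map (Sum.map m m')))
    rw [fiberCard_sumElim, fiberCard_sumElim, fiberCard_sumElim, add_add_add_comm]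
    refine congrArg₂ (· + ·) ?_ ?_
    · refine fiberCard_map_eq_add (Option.map_injective Sum.inl_injective)
        (Option.map_injective Sum.inl_injective) ?_ ?_ h.fiberCard_ends s
      · rintro (_ | _) <;> rfl
      · rintro (_ | y | y) (_ | n) hy <;> cases hy
        exacts [⟨none, rfl⟩, ⟨some y, rfl⟩]
    · refine fiberCard_map_eq_add (Option.map_injective Sum.inr_injective)
        (Option.map_injective Sum.inr_injective) ?_ ?_ h'.fiberCard_ends s
      · rintro (_ | _) <;> rfl
      · rintro (_ | y | y) (_ | n) hy <;> cases hy
        exacts [⟨none, rfl⟩, ⟨some y, rfl⟩]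

end IsBlowUp

end ExtGraph

namespace CliqueExt

/-- The map between the graphs that arise from `F` and `H` by a clique extension, given a map `κ`
between `F` and `H`. -/
def map {F H : ExtGraph} (κ : F.V → H.V) : (τ : CliqueExt) → (τ.eval F).V → (τ.eval H).V
  | .var => κ
  | .relabel _ _ _ τ => τ.map κ
  | .join _ _ _ τ => τ.map κ
  | .unionLeft τ _ => Sum.map (τ.map κ) id
  | .unionRight _ τ => Sum.map id (τ.map κ)

variable {F H : ExtGraph} (κ : F.V → H.V) (τ : CliqueExt)

theorem map_inner (u : F.V) : τ.map κ (τ.inner F u) = τ.inner H (κ u) := by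
  induction τ with
  | var => rfl
  | relabel _ _ _ _ ih => exact ih
  | join _ _ _ _ ih => exact ih
  | unionLeft _ _ ih => exact congrArg Sum.inl ih
  | unionRight _ _ ih => exact congrArg Sum.inr ih

theorem map_outer (w : (τ.eval .empty).V) : τ.map κ (τ.outer F w) = τ.outer H w := by
  induction τ with
  | var => exact w.elim
  | relabel _ _ _ _ ih => exact ih w
  | join _ _ _ _ ih => exact ih w
  | unionLeft _ _ ih =>
    rcases w with w | w
    exacts [congrArg Sum.inl (ih w), rfl]
  | unionRight _ _ ih =>
    rcases w with w | w
    exacts [rfl, congrArg Sum.inr (ih w)]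

theorem isBlowUp_eval [IsEmpty H.E] {κ : F.V → H.V} (hκ : ∀ v, H.lab (κ v) = F.lab v) :
    (τ.eval F).IsBlowUp (τ.eval H) (τ.map κ)
      (fun e => (F.ends e).map (Option.map (τ.inner F))) := by
  induction τ with
  | var =>
    have hH (s : Sym2 (Option H.V)) : fiberCard H.ends s = 0 := fiberCard_of_forall_ne isEmptyElim
    refine ⟨hκ, fun s => ((congrArg₂ (· + ·) ?_ (hH _)).trans (add_zero _)).symm⟩
    exact congrArg (fiberCard · s) (funext fun e =>
      (congrArg (Sym2.map · (F.ends e)) Option.map_id).trans (congrFun Sym2.map_id _))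
  | relabel i j _ _ ih => exact ih.relabel i j
  | join _ _ hij _ ih => exact ih.join hij
  | unionLeft _ μ ih =>
    refine (ih.union (.refl μ.eval)).congr fun s => ?_
    refine (fiberCard_sumElim _ _ s).trans ?_
    rw [fiberCard_of_forall_ne (a := _ ∘ Empty.elim) fun e => e.elim, add_zero]
    exact congrArg (fiberCard · s) (funext fun e => (Sym2.map_map _).trans
      (congrArg (Sym2.map · _) (Option.map_comp_map _ _)))
  | unionRight μ _ ih =>
    refine ((ExtGraph.IsBlowUp.refl μ.eval).union ih).congr fun s => ?_
    refine (fiberCard_sumElim _ _ s).trans ?_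
    rw [fiberCard_of_forall_ne (a := _ ∘ Empty.elim) fun e => e.elim, zero_add]
    exact congrArg (fiberCard · s) (funext fun e => (Sym2.map_map _).trans
      (congrArg (Sym2.map · _) (Option.map_comp_map _ _)))

end CliqueExt

/-! ### Compatibility -/

theorem CliqueExpr.finite_eval (μ : CliqueExpr) : Finite μ.eval.V ∧ Finite μ.eval.E := by
  induction μ with
  | vertex => exact ⟨inferInstanceAs (Finite Unit), inferInstanceAs (Finite Empty)⟩
  | relabel _ _ _ _ ih => exact ih
  | join _ _ _ μ ih =>
    have ⟨_, _⟩ := ih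
    exact ⟨ih.1, inferInstanceAs (Finite (_ ⊕ {e : μ.eval.V × μ.eval.V // _}))⟩
  | union _ _ ih ih' =>
    have ⟨_, _⟩ := ih
    have ⟨_, _⟩ := ih'
    exact ⟨inferInstanceAs (Finite (_ ⊕ _)), inferInstanceAs (Finite (_ ⊕ _))⟩

theorem CliqueExt.finite_eval (τ : CliqueExt) (F : ExtGraph) [Finite F.V] [Finite F.E] :
    Finite (τ.eval F).V ∧ Finite (τ.eval F).E := by
  induction τ with
  | var => exact ⟨‹_›, ‹_›⟩
  | relabel _ _ _ _ ih => exact ih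
  | join _ _ _ τ ih =>
    have ⟨_, _⟩ := ih
    exact ⟨ih.1, inferInstanceAs (Finite (_ ⊕ {e : (τ.eval F).V × (τ.eval F).V // _}))⟩
  | unionLeft _ μ ih | unionRight μ _ ih =>
    have ⟨_, _⟩ := ih
    have ⟨_, _⟩ := μ.finite_eval
    exact ⟨inferInstanceAs (Finite (_ ⊕ _)), inferInstanceAs (Finite (_ ⊕ _))⟩

theorem induce_range_hasNoCycle_iff {V E N : Type} [Finite E] {ends : E → Sym2 V} {ι : N → V}
    (hι : Function.Injective ι) :
    ((multigraphOfEnds ends).induce (Set.range ι)).HasNoCycle ↔ IsForest (blowUp ends ι) := by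
  rw [hasNoCycle_iff, isForest_iff]
  have horigin : Function.Injective (BlowUpEdge.origin (κ := ends) (ℓ := ι)) := fun e e' h =>
    BlowUpEdge.ext (Sym2.map.injective hι (e.map_ends.trans (h ▸ e'.map_ends.symm))) h
  constructor
  · intro h c
    obtain ⟨f, hf⟩ := h (Function.extend BlowUpEdge.origin c 0)
    refine ⟨f ∘ ι, fun e x y he => ?_⟩
    have hlink : ends e.origin = s(ι x, ι y) := by rw [← e.map_ends, ← blowUp, he, Sym2.map_mk]
    rw [← horigin.extend_apply c 0 e, ← hf e.origin (ι x) (ι y) ⟨hlink, ⟨x, rfl⟩, ⟨y, rfl⟩⟩]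
    rfl
  · intro h c
    obtain ⟨f, hf⟩ := h (c ∘ BlowUpEdge.origin)
    refine ⟨Function.extend ι f 0, ?_⟩
    rintro e _ _ ⟨he, ⟨x, rfl⟩, ⟨y, rfl⟩⟩
    rw [hι.extend_apply, hι.extend_apply]
    exact hf ⟨s(x, y), e, Eq.symm he⟩ x y rfl

theorem existsUnique_get_eq_of_count_eq_one {α : Type*} [DecidableEq α] {l : List α} {a : α}
    (h : l.count a = 1) : ∃! i, l.get i = a := by
  have hcard : {i | l.get i = a}.encard = 1 :=
    (fiberCard_get l a).trans (congrArg Nat.cast h)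
  obtain ⟨i, hi⟩ := Set.encard_eq_one.1 hcard
  exact ⟨i, hi.ge rfl, fun j hj => hi.le hj⟩

theorem canonForest.existsUnique_lab_eq_zero {k : ℕ} {p : Multiset (LVec k)} (hp : IsPattern p) :
    ∃! u, (canonForest p).lab u = 0 := by
  obtain ⟨-, z, -, hz1, hz0, hother⟩ := hp
  rw [← Multiset.coe_toList p, Multiset.coe_count] at hz1
  obtain ⟨t, ht, htu⟩ := existsUnique_get_eq_of_count_eq_one hz1
  have hc : (pathLabels (p.toList.get t)).count 0 = 1 := by
    rw [count_pathLabels, ht, hz0]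
    rfl
  obtain ⟨i, hi, hiu⟩ := existsUnique_get_eq_of_count_eq_one hc
  refine ⟨⟨t, i⟩, hi, ?_⟩
  rintro ⟨t', i'⟩ h'
  have hne : p.toList.get t' 0 ≠ 0 := by
    intro h
    have hmem : (0 : Fin (k + 1)) ∈ pathLabels (p.toList.get t') := h' ▸ List.get_mem _ _
    have := List.count_pos_iff.2 hmem
    rw [count_pathLabels, h] at this
    exact lt_irrefl 0 this
  obtain rfl : t' = t := by
    refine htu t' ?_
    by_contra hz'
    exact hne (hother _ (Multiset.mem_toList.1 (List.get_mem _ _)) hz')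
  exact congrArg _ (hiu i' h')

namespace CliqueExt

variable (τ : CliqueExt)

theorem inner_injective (F : ExtGraph) : Function.Injective (τ.inner F) := by
  induction τ with
  | var => exact Function.injective_id
  | relabel _ _ _ _ ih => exact ih
  | join _ _ _ _ ih => exact ih
  | unionLeft _ _ ih => exact Sum.inl_injective.comp ih
  | unionRight _ _ ih => exact Sum.inr_injective.comp ih

theorem outer_injective (F : ExtGraph) : Function.Injective (τ.outer F) := by
  induction τ with
  | var => exact fun w => w.elim
  | relabel _ _ _ _ ih => exact ih
  | join _ _ _ _ ih => exact ih
  | unionLeft _ _ ih => exact Sum.map_injective.2 ⟨ih, Function.injective_id⟩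
  | unionRight _ _ ih => exact Sum.map_injective.2 ⟨Function.injective_id, ih⟩

theorem inner_ne_outer {F : ExtGraph} (u : F.V) (w : (τ.eval .empty).V) :
    τ.inner F u ≠ τ.outer F w := by
  induction τ with
  | var => exact w.elim
  | relabel _ _ _ _ ih => exact ih w
  | join _ _ _ _ ih => exact ih w
  | unionLeft _ _ ih =>
    rcases w with w | w
    exacts [fun h => ih w (Sum.inl_injective h), Sum.inl_ne_inr]
  | unionRight _ _ ih =>
    rcases w with w | w
    exacts [Sum.inr_ne_inl, fun h => ih w (Sum.inr_injective h)]

end CliqueExt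

namespace LGraph

variable {k : ℕ} {F : LGraph k}

/-- The vertex of `F.toExt` that a vertex of `F` gives rise to. -/
def extVertex (u : F.V) : Option F.toExt.V :=
  if h : F.lab u ≠ 0 then some ⟨u, h⟩ else none

theorem extVertex_of_eq_zero {u : F.V} (hu : F.lab u = 0) : F.extVertex u = none :=
  dif_neg (not_not.2 hu)

theorem extVertex_of_ne_zero {u : F.V} (hu : F.lab u ≠ 0) : F.extVertex u = some ⟨u, hu⟩ :=
  dif_pos hu

theorem extVertex_injective (hF : ∃! u, F.lab u = 0) : Function.Injective F.extVertex := by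
  intro u v huv
  unfold extVertex at huv
  split_ifs at huv with hu hv hv
  · exact congrArg Subtype.val (Option.some.inj huv)
  · exact hF.unique (not_not.1 hu) (not_not.1 hv)

/-- The vertices of `F`, sorted by their labels. -/
def toEdgeless (F : LGraph k) (v : F.toExt.V) : (edgeless k).toExt.V := ⟨F.lab v.1, v.2⟩

theorem extVertex_map_toEdgeless (u : F.V) :
    (F.extVertex u).map F.toEdgeless = (edgeless k).extVertex (F.lab u) := by
  by_cases hu : F.lab u = 0
  · exact (congrArg _ (extVertex_of_eq_zero hu)).trans
      (extVertex_of_eq_zero (F := edgeless k) hu).symm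
  · exact (congrArg _ (extVertex_of_ne_zero hu)).trans
      (extVertex_of_ne_zero (F := edgeless k) hu).symm

/-- The vertices of `F` and the elements of `S`, as vertices of the graph that arises from `F` by
the clique extension `τ`. -/
def compatVertex (F : LGraph k) (τ : CliqueExt) (S : Set (Option τ.graph.V)) :
    F.V ⊕ {w : τ.graph.V // some w ∈ S} → Option (τ.eval F.toExt).V :=
  Sum.elim (fun u => (F.extVertex u).map (τ.inner F.toExt)) fun w => some (τ.outer F.toExt w.1)

variable (τ : CliqueExt) (S : Set (Option τ.graph.V))

theorem compatVertex_injective (hF : ∃! u, F.lab u = 0) :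
    Function.Injective (F.compatVertex τ S) := by
  have hne {u w} : F.compatVertex τ S (.inl u) ≠ F.compatVertex τ S (.inr w) := by
    intro h
    obtain ⟨u', -, h'⟩ := Option.map_eq_some_iff.1 h
    exact τ.inner_ne_outer _ _ h'
  rintro (u | w) (v | w') h
  · exact congrArg _ (extVertex_injective hF (Option.map_injective (τ.inner_injective _) h))
  · exact absurd h hne
  · exact absurd h.symm hne
  · exact congrArg _ (Subtype.ext (τ.outer_injective _ (Option.some.inj h)))

theorem range_compatVertex (hF : ∃ u, F.lab u = 0) : Set.range (F.compatVertex τ S) =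
    Set.range (Option.map (τ.inner F.toExt)) ∪ Option.map (τ.outer F.toExt) '' S := by
  have hnone : none ∈ Set.range (F.compatVertex τ S) := by
    obtain ⟨u, hu⟩ := hF
    exact ⟨.inl u, congrArg (Option.map _) (extVertex_of_eq_zero hu)⟩
  apply Set.Subset.antisymm
  · rintro _ ⟨u | w, rfl⟩
    exacts [.inl ⟨_, rfl⟩, .inr ⟨some w.1, w.2, rfl⟩]
  · rintro _ (⟨_ | u, rfl⟩ | ⟨_ | w, hw, rfl⟩)
    · exact hnone
    · exact ⟨.inl u.1, congrArg (Option.map _) (extVertex_of_ne_zero u.2)⟩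
    · exact hnone
    · exact ⟨.inr ⟨w, hw⟩, rfl⟩

theorem map_compatVertex (x) : (F.compatVertex τ S x).map (τ.map F.toEdgeless) =
    (edgeless k).compatVertex τ S (Sum.map F.lab id x) := by
  rcases x with u | w
  · change ((F.extVertex u).map _).map _ = ((edgeless k).extVertex (F.lab u)).map _
    rw [← extVertex_map_toEdgeless, Option.map_map, Option.map_map]
    exact congrArg (Option.map · _) (funext (τ.map_inner F.toEdgeless))
  · exact congrArg some (τ.map_outer F.toEdgeless w.1)

theorem fiberCard_blowUp_compatVertex (hF : ∃! u, F.lab u = 0) (s) :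
    fiberCard (blowUp (τ.eval F.toExt).ends (F.compatVertex τ S)) s = fiberCard (surround F
      (blowUp (τ.eval (edgeless k).toExt).ends ((edgeless k).compatVertex τ S))) s := by
  have : IsEmpty (edgeless k).toExt.E := ⟨fun e => SimpleGraph.edgeSet_bot.subset e.2⟩
  have hκ (v) : (edgeless k).toExt.lab (F.toEdgeless v) = F.toExt.lab v := rfl
  have hinner : fiberCard (fun e => (F.toExt.ends e).map (Option.map (τ.inner F.toExt)))
      (s.map (F.compatVertex τ S)) = fiberCard (fun e : F.G.edgeSet => e.1.map Sum.inl) s := by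
    rw [← fiberCard_injective_comp (Sym2.map.injective (F.compatVertex_injective τ S hF))]
    exact congrArg (fiberCard · _) (funext fun e => (Sym2.map_map _).trans
      (Sym2.map_map (f := Sum.inl) (g := F.compatVertex τ S) e.1).symm)
  have hmap : (s.map (F.compatVertex τ S)).map (Option.map (τ.map F.toEdgeless)) =
      (s.map (Sum.map F.lab id)).map ((edgeless k).compatVertex τ S) := by
    rw [Sym2.map_map, Sym2.map_map]
    exact congrArg (Sym2.map · s) (funext (F.map_compatVertex τ S))
  rw [fiberCard_blowUp, (τ.isBlowUp_eval hκ).fiberCard_ends, hinner, hmap,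
    surround, fiberCard_sumElim, fiberCard_blowUp, fiberCard_blowUp]

end LGraph

theorem CliqueExt.compatible_iff {k : ℕ} {F : LGraph k} [Finite F.V] (hF : ∃! u, F.lab u = 0)
    (τ : CliqueExt) (S : Set (Option τ.graph.V)) :
    τ.Compatible S F.toExt ↔ IsForest (surround F
      (blowUp (τ.eval (edgeless k).toExt).ends ((edgeless k).compatVertex τ S))) := by
  have : Finite F.toExt.V := inferInstanceAs (Finite {v : F.V // F.lab v ≠ 0})
  have : Finite F.toExt.E := inferInstanceAs (Finite F.G.edgeSet)
  have := (τ.finite_eval F.toExt).2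
  rw [Compatible, ← F.range_compatVertex τ S hF.exists]
  refine (induce_range_hasNoCycle_iff (F.compatVertex_injective τ S hF)).trans ?_
  exact isForest_comp_congr id fun s => congrArg (min 2) (F.fiberCard_blowUp_compatVertex τ S hF s)

theorem even_ncard_compatible {k : ℕ} {v₁ v₂ v₃ : LVec k} {R : Multiset (LVec k)}
    (h : ∀ i, IsPattern (mergedPatterns v₁ v₂ v₃ R i)) (τ : CliqueExt)
    (S : Set (Option τ.graph.V)) :
    Even {i | τ.Compatible S (canonForest (mergedPatterns v₁ v₂ v₃ R i)).toExt}.ncard := by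
  refine (congrArg (Even ∘ Set.ncard) (Set.ext fun i => ?_)).mp
    (even_ncard_isForest_surround (blowUp (τ.eval (edgeless k).toExt).ends
      ((edgeless k).compatVertex τ S)) v₁ v₂ v₃ R)
  exact (CliqueExt.compatible_iff (canonForest.existsUnique_lab_eq_zero (h i)) τ S).symm

/-! ### Counting in symmetric differences -/

open scoped Classical in
theorem even_ncard_fin_succ_iff {n : ℕ} {P : Fin (n + 1) → Prop} :
    Even {i | P i}.ncard ↔
      {i : Fin n | P i.succ}.ncard ≡ (if P 0 then 1 else 0) [MOD 2] := by
  rw [ncard_setOf_fin_succ, Nat.even_iff, Nat.ModEq]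
  split_ifs <;> omega

open scoped symmDiff in
theorem ncard_sep_symmDiff {α : Type*} [DecidableEq α] (A B : Finset α) (P : α → Prop) :
    {a | a ∈ A ∆ B ∧ P a}.ncard ≡ {a | a ∈ A ∧ P a}.ncard + {a | a ∈ B ∧ P a}.ncard [MOD 2] := by
  classical
  have hcard (C : Finset α) : {a | a ∈ C ∧ P a}.ncard = (C.filter P).card := by
    rw [← Set.ncard_coe_finset, Finset.coe_filter]
  have hfilter : (A ∆ B).filter P = A.filter P \ B.filter P ∪ B.filter P \ A.filter P := by
    ext a
    simp only [Finset.mem_filter, Finset.mem_symmDiff, Finset.mem_union, Finset.mem_sdiff]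
    tauto
  have hA := Finset.card_sdiff_add_card_inter (A.filter P) (B.filter P)
  have hB := Finset.card_sdiff_add_card_inter (B.filter P) (A.filter P)
  rw [Finset.inter_comm] at hB
  rw [hcard, hcard, hcard, hfilter, Finset.card_union_of_disjoint disjoint_sdiff_sdiff, Nat.ModEq]
  omega

open scoped Classical in
theorem ncard_sep_singleton {α : Type*} (a : α) (P : α → Prop) :
    {b | b ∈ ({a} : Finset α) ∧ P b}.ncard = if P a then 1 else 0 := by
  simp only [Finset.mem_singleton]
  split_ifs with h
  · exact Set.ncard_eq_one.2 ⟨a, Set.ext fun b => ⟨fun hb => hb.1, fun hb => ⟨hb, hb ▸ h⟩⟩⟩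
  · convert Set.ncard_empty α
    exact Set.eq_empty_of_forall_notMem fun b hb => h (hb.1 ▸ hb.2)

open scoped symmDiff in
theorem ncard_sep_symmDiff_symmDiff {α : Type*} [DecidableEq α] (a₁ a₂ a₃ : α) (P : α → Prop) :
    {a | a ∈ ({a₁} ∆ {a₂} ∆ {a₃} : Finset α) ∧ P a}.ncard ≡
      {i : Fin 3 | P (![a₁, a₂, a₃] i)}.ncard [MOD 2] := by
  refine (ncard_sep_symmDiff _ _ P).trans (((ncard_sep_symmDiff _ _ P).add_right _).trans ?_)
  rw [ncard_sep_singleton, ncard_sep_singleton, ncard_sep_singleton, ncard_setOf_fin_succ,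
    ncard_setOf_fin_succ, ncard_setOf_fin_succ, Set.eq_empty_of_isEmpty {i : Fin 0 | _},
    Set.ncard_empty, add_assoc]
  rfl

open scoped Classical symmDiff in
theorem even_number_acyclic_general {k : ℕ} (v₁ v₂ v₃ : LVec k)
    (R p₁ p₂ p₃ p₄ : Multiset (LVec k))
    (hp₁ : p₁ = twoUnion {v₁, twoSum v₂ v₃} R)
    (hp₂ : p₂ = twoUnion {v₂, twoSum v₁ v₃} R)
    (hp₃ : p₃ = twoUnion {v₃, twoSum v₁ v₂} R)
    (hp₄ : p₄ = twoUnion {twoSum (twoSum v₁ v₂) v₃} R) :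
    (∀ d : ExtDatum k,
      Even {i : Fin 4 | (glue (canonForest (![p₁, p₂, p₃, p₄] i)) d).HasNoCycle}.ncard ∧
      {i : Fin 3 | (glue (canonForest (![p₂, p₃, p₄] i)) d).HasNoCycle}.ncard ≡
        (if (glue (canonForest p₁) d).HasNoCycle then 1 else 0) [MOD 2]) ∧
    (IsPattern p₁ → IsPattern p₂ → IsPattern p₃ → IsPattern p₄ →
      ∀ (τ : CliqueExt) (S : Set (Option τ.graph.V)),
        Even {i : Fin 4 | τ.Compatible S (canonForest (![p₁, p₂, p₃, p₄] i)).toExt}.ncard ∧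
        {p | p ∈ ({p₁} : Finset _) ∧ τ.Compatible S (canonForest p).toExt}.ncard ≡
          {p | p ∈ ({p₂} ∆ {p₃} ∆ {p₄} : Finset _) ∧
            τ.Compatible S (canonForest p).toExt}.ncard [MOD 2]) := by
  subst hp₁ hp₂ hp₃ hp₄
  refine ⟨fun d => ?_, fun h₁ h₂ h₃ h₄ τ S => ?_⟩
  · have hglue := even_ncard_glue_hasNoCycle v₁ v₂ v₃ R d
    exact ⟨hglue, even_ncard_fin_succ_iff.1 hglue⟩
  · have hpattern : ∀ i, IsPattern (mergedPatterns v₁ v₂ v₃ R i) :=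
      Fin.forall_fin_succ.2 ⟨h₁, Fin.forall_fin_succ.2 ⟨h₂, Fin.forall_fin_two.2 ⟨h₃, h₄⟩⟩⟩
    have hcompat := even_ncard_compatible hpattern τ S
    refine ⟨hcompat, ?_⟩
    rw [ncard_sep_singleton]
    exact (even_ncard_fin_succ_iff.1 hcompat).symm.trans (ncard_sep_symmDiff_symmDiff _ _ _
      fun p => τ.Compatible S (canonForest p).toExt).symm

open scoped Classical symmDiff in
theorem even_number_acyclic {k : ℕ} (v₁ v₂ v₃ : LVec k)
    (R p₁ p₂ p₃ p₄ : Multiset (LVec k))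
    (hp₁ : p₁ = twoUnion {v₁, twoSum v₂ v₃} R)
    (hp₂ : p₂ = twoUnion {v₂, twoSum v₁ v₃} R)
    (hp₃ : p₃ = twoUnion {v₃, twoSum v₁ v₂} R)
    (hp₄ : p₄ = twoUnion {twoSum (twoSum v₁ v₂) v₃} R)
    (h₁ : IsPattern p₁) (h₂ : IsPattern p₂) (h₃ : IsPattern p₃) (h₄ : IsPattern p₄) :
    (∀ d : ExtDatum k,
      Even {i : Fin 4 | (glue (canonForest (![p₁, p₂, p₃, p₄] i)) d).HasNoCycle}.ncard ∧
      {i : Fin 3 | (glue (canonForest (![p₂, p₃, p₄] i)) d).HasNoCycle}.ncard ≡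
        (if (glue (canonForest p₁) d).HasNoCycle then 1 else 0) [MOD 2]) ∧
    (∀ (τ : CliqueExt) (S : Set (Option τ.graph.V)), τ.IsPartialSolution S →
      Even {i : Fin 4 | τ.Compatible S (canonForest (![p₁, p₂, p₃, p₄] i)).toExt}.ncard) ∧
    PatternsEquiv {p₁} ({p₂} ∆ {p₃} ∆ {p₄}) := by
  have ⟨hglue, hcompat⟩ := even_number_acyclic_general v₁ v₂ v₃ R p₁ p₂ p₃ p₄ hp₁ hp₂ hp₃ hp₄
  exact ⟨hglue, fun τ S _ => (hcompat h₁ h₂ h₃ h₄ τ S).1,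
    fun τ S _ => (hcompat h₁ h₂ h₃ h₄ τ S).2⟩
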